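/- arXiv:2604.20187 — 4 statements merged into one kernel-verified Lean document; each statement's English description precedes it below -/
import Mathlib

section
/- Let S : ℝ² → ℝ be smooth with compact support and define the two-dimensional time-domain far-field pattern p^∞(x̂,t) := (1/(2√2 π)) ∫_{ℝ²} 1_{{t + x̂·y > 0}} (t + x̂·y)^{−1/2} S(y) dy. Then for every y ∈ ℝ², S(y) = (e^{−iπ/4}/√(2π³)) ∫_{ℝ²} √|x| · ( lim_{η→0⁺} ∫_ℝ p^∞(x/|x|, t − (x/|x|)·y) e^{i|x|t} e^{−ηt} dt ) dx, where for each x ≠ 0 and each η > 0 the inner integral converges absolutely and the Abel limit as η → 0⁺ exists. -/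
open MeasureTheory Real Filter
open scoped RealInnerProductSpace Topology

/-!
Fix a unit vector `u`, put `φ z = ⟪u, z - y⟫` and let `b = η - i r` with `η, r > 0`. Up to its
constant, `t ↦ p^∞(u, t - ⟪u, y⟫)` is the superposition `∫ (t + φ z)₊^{-1/2} S z dz` of translates
of one kernel. By Fubini its Laplace transform at `b` is the Laplace transform `√(π / b)` of the
kernel times `∫ S z e^{b φ z} dz`. As `η → 0⁺` the first factor tends to `e^{iπ/4} √π / √r` and the
second one to `∫ S z e^{-i ⟪r u, z - y⟫} dz`. For `r u = x` the weight `√‖x‖` cancels `1 / √r`, and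
integrating over `x` is Fourier inversion at `y`.
-/

section Superposition

variable {Ω : Type*} [MeasurableSpace Ω] {μ : Measure Ω} {S : Ω → ℂ} {φ : Ω → ℝ}

theorem measurePreserving_prod_add_right [SFinite μ] (hφ : Measurable φ) :
    MeasurePreserving (fun q : Ω × ℝ ↦ (q.1, q.2 + φ q.1)) (μ.prod volume) (μ.prod volume) :=
  (MeasurePreserving.id μ).skew_product (g := fun z t ↦ t + φ z) (by fun_prop)
    (.of_forall fun z ↦ map_add_right_eq_self volume (φ z))

theorem mul_exp_mul_mul_exp_neg_add (k S b t c : ℂ) :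
    S * Complex.exp (b * c) * (k * Complex.exp (-b * (t + c))) =
      k * S * Complex.exp (-b * t) := by
  have hexp : Complex.exp (-b * t) = Complex.exp (b * c) * Complex.exp (-b * (t + c)) := by
    rw [← Complex.exp_add]
    ring_nf
  rw [hexp]
  ring

theorem integrable_prod_translate_mul_exp_neg [SFinite μ] {k : ℝ → ℂ} {b : ℂ} (hφ : Measurable φ)
    (hk : Integrable fun t : ℝ ↦ k t * Complex.exp (-b * t))
    (hS : Integrable (fun z ↦ S z * Complex.exp (b * φ z)) μ) :
    Integrable (fun q : Ω × ℝ ↦ k (q.2 + φ q.1) * S q.1 * Complex.exp (-b * q.2))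
      (μ.prod volume) := by
  refine ((measurePreserving_prod_add_right hφ).integrable_comp_of_integrable
    (hS.mul_prod hk)).congr (.of_forall fun q ↦ ?_)
  simp only [Function.comp_apply, Complex.ofReal_add, mul_exp_mul_mul_exp_neg_add]

theorem integrable_superposition_mul_exp_neg [SFinite μ] {k : ℝ → ℂ} {b : ℂ} (hφ : Measurable φ)
    (hk : Integrable fun t : ℝ ↦ k t * Complex.exp (-b * t))
    (hS : Integrable (fun z ↦ S z * Complex.exp (b * φ z)) μ) :
    Integrable fun t : ℝ ↦ (∫ z, k (t + φ z) * S z ∂μ) * Complex.exp (-b * t) := by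
  simpa only [integral_mul_const] using
    (integrable_prod_translate_mul_exp_neg hφ hk hS).integral_prod_right

theorem integral_superposition_mul_exp_neg [SFinite μ] {k : ℝ → ℂ} {b : ℂ} (hφ : Measurable φ)
    (hk : Integrable fun t : ℝ ↦ k t * Complex.exp (-b * t))
    (hS : Integrable (fun z ↦ S z * Complex.exp (b * φ z)) μ) :
    ∫ t : ℝ, (∫ z, k (t + φ z) * S z ∂μ) * Complex.exp (-b * t) =
      (∫ z, S z * Complex.exp (b * φ z) ∂μ) * ∫ t : ℝ, k t * Complex.exp (-b * t) := by
  have translate (z : Ω) : ∫ t : ℝ, k (t + φ z) * S z * Complex.exp (-b * t) =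
      S z * Complex.exp (b * φ z) * ∫ t : ℝ, k t * Complex.exp (-b * t) := by
    rw [← integral_add_right_eq_self (fun t : ℝ ↦ k t * Complex.exp (-b * t)) (φ z),
      ← integral_const_mul]
    simp only [Complex.ofReal_add, mul_exp_mul_mul_exp_neg_add]
  calc ∫ t : ℝ, (∫ z, k (t + φ z) * S z ∂μ) * Complex.exp (-b * t)
      = ∫ t : ℝ, ∫ z, k (t + φ z) * S z * Complex.exp (-b * t) ∂μ := by
        simp only [integral_mul_const]
    _ = ∫ z, ∫ t : ℝ, k (t + φ z) * S z * Complex.exp (-b * t) ∂volume ∂μ :=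
        (integral_integral_swap (integrable_prod_translate_mul_exp_neg hφ hk hS)).symm
    _ = (∫ z, S z * Complex.exp (b * φ z) ∂μ) * ∫ t : ℝ, k t * Complex.exp (-b * t) := by
        simp only [translate, integral_mul_const]

theorem norm_exp_sub_I_mul (η r c : ℝ) :
    ‖Complex.exp ((η - Complex.I * r) * c)‖ = Real.exp (η * c) := by
  simp [Complex.norm_exp]

theorem exp_mul_le_one_add_exp {η : ℝ} (hη₀ : 0 ≤ η) (hη₁ : η ≤ 1) (c : ℝ) :
    Real.exp (η * c) ≤ 1 + Real.exp c := by
  rcases le_total c 0 with hc | hc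
  · have : Real.exp (η * c) ≤ 1 := Real.exp_le_one_iff.2 (mul_nonpos_of_nonneg_of_nonpos hη₀ hc)
    linarith [Real.exp_pos c]
  · have : Real.exp (η * c) ≤ Real.exp c := Real.exp_le_exp.2 (mul_le_of_le_one_left hc hη₁)
    linarith

theorem tendsto_integral_mul_exp_sub_I_mul (hφ : Measurable φ) (hS : Integrable S μ)
    (hSφ : Integrable (fun z ↦ S z * Complex.exp (φ z)) μ) (r : ℝ) :
    Tendsto (fun η : ℝ ↦ ∫ z, S z * Complex.exp ((η - Complex.I * r) * φ z) ∂μ) (𝓝[>] 0)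
      (𝓝 (∫ z, S z * Complex.exp (-Complex.I * r * φ z) ∂μ)) := by
  refine tendsto_integral_filter_of_dominated_convergence
    (fun z ↦ ‖S z‖ + ‖S z * Complex.exp (φ z)‖) (.of_forall fun η ↦ ?_) ?_
    (hS.norm.add hSφ.norm) (.of_forall fun z ↦ ?_)
  · exact hS.aestronglyMeasurable.mul (by fun_prop)
  · filter_upwards [Ioc_mem_nhdsGT zero_lt_one] with η hη
    refine .of_forall fun z ↦ ?_
    calc ‖S z * Complex.exp ((η - Complex.I * r) * φ z)‖
        = ‖S z‖ * Real.exp (η * φ z) := by rw [norm_mul, norm_exp_sub_I_mul]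
      _ ≤ ‖S z‖ * (1 + Real.exp (φ z)) := by
        gcongr
        exact exp_mul_le_one_add_exp hη.1.le hη.2 _
      _ = ‖S z‖ + ‖S z * Complex.exp (φ z)‖ := by
        rw [norm_mul, Complex.norm_exp_ofReal]
        ring
  · have hcont : Continuous fun η : ℝ ↦ S z * Complex.exp ((η - Complex.I * r) * φ z) := by fun_prop
    simpa using hcont.continuousWithinAt (s := Set.Ioi 0) (x := 0) |>.tendsto

end Superposition

section InvSqrt

variable {b : ℂ}

theorem inv_sqrt_mul_exp_neg_eq_zero (b : ℂ) (t : ℝ) (ht : t ∉ Set.Ioi 0) :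
    ((√t)⁻¹ : ℂ) * Complex.exp (-b * t) = 0 := by
  simp [Real.sqrt_eq_zero_of_nonpos (not_lt.1 ht)]

theorem integrable_inv_sqrt_mul_exp_neg (hb : 0 < b.re) :
    Integrable fun t : ℝ ↦ ((√t)⁻¹ : ℂ) * Complex.exp (-b * t) := by
  have hgamma := integrableOn_rpow_mul_exp_neg_mul_rpow (p := 1) (s := -1 / 2) (b := b.re)
    (by norm_num) one_pos hb
  rw [← integrableOn_iff_integrable_of_support_subset (s := Set.Ioi 0)]
  · refine hgamma.mono' (Measurable.aestronglyMeasurable (by fun_prop)) ?_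
    filter_upwards [ae_restrict_mem measurableSet_Ioi] with t ht
    have ht₀ : 0 ≤ t := le_of_lt ht
    rw [norm_mul, Complex.norm_exp, norm_inv, Complex.norm_real,
      Real.norm_of_nonneg (by positivity), Real.sqrt_eq_rpow, ← Real.rpow_neg ht₀]
    simp [neg_div]
  · exact Function.support_subset_iff'.2 (inv_sqrt_mul_exp_neg_eq_zero b)

-- Substituting `t = x ^ 2` turns the transform into a Gaussian integral.
theorem integral_inv_sqrt_mul_exp_neg (hb : 0 < b.re) :
    ∫ t : ℝ, ((√t)⁻¹ : ℂ) * Complex.exp (-b * t) = (π / b) ^ (1 / 2 : ℂ) := by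
  have substituted : ∀ x ∈ Set.Ioi (0 : ℝ), (2 * x ^ ((2 : ℝ) - 1)) •
      (((√(x ^ (2 : ℝ)))⁻¹ : ℂ) * Complex.exp (-b * (x ^ (2 : ℝ) : ℝ))) =
      2 * Complex.exp (-b * (x : ℂ) ^ 2) := fun x hx ↦ by
    have hx₀ : (x : ℂ) ≠ 0 := by exact_mod_cast hx.ne'
    rw [Real.rpow_two, Real.sqrt_sq hx.le, Complex.real_smul, show (2 : ℝ) - 1 = 1 by norm_num,
      Real.rpow_one]
    push_cast
    field_simp
  rw [← setIntegral_eq_integral_of_forall_compl_eq_zero (inv_sqrt_mul_exp_neg_eq_zero b),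
    ← integral_comp_rpow_Ioi_of_pos two_pos, setIntegral_congr_fun measurableSet_Ioi substituted,
    integral_const_mul, integral_gaussian_complex_Ioi hb]
  ring

theorem div_neg_I_mul (c r : ℂ) : c / (-Complex.I * r) = c / r * Complex.I := by
  rw [neg_mul, div_neg, mul_comm, ← div_div, Complex.div_I, neg_neg]

theorem ofReal_mul_I_cpow_half {c : ℝ} (hc : 0 < c) :
    (c * Complex.I) ^ (1 / 2 : ℂ) = √c * Complex.exp (Complex.I * π / 4) := by
  have hcI : (c : ℂ) * Complex.I ≠ 0 := mul_ne_zero (by exact_mod_cast hc.ne') Complex.I_ne_zero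
  rw [Complex.cpow_def_of_ne_zero hcI, Complex.log_ofReal_mul hc Complex.I_ne_zero, Complex.log_I,
    Real.sqrt_eq_rpow, Real.rpow_def_of_pos hc, Complex.ofReal_exp, ← Complex.exp_add]
  push_cast
  ring_nf

theorem tendsto_pi_div_sub_I_mul_cpow_half {r : ℝ} (hr : 0 < r) :
    Tendsto (fun η : ℝ ↦ (π / (η - Complex.I * r)) ^ (1 / 2 : ℂ)) (𝓝 0)
      (𝓝 (√π / √r * Complex.exp (Complex.I * π / 4))) := by
  have hr₀ : (r : ℂ) ≠ 0 := by exact_mod_cast hr.ne'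
  have hbase : (π : ℂ) / (-Complex.I * r) = (π / r : ℝ) * Complex.I := by
    rw [div_neg_I_mul, Complex.ofReal_div]
  have hlim : Tendsto (fun η : ℝ ↦ (π : ℂ) / (η - Complex.I * r)) (𝓝 0)
      (𝓝 ((π / r : ℝ) * Complex.I)) := by
    have : ContinuousAt (fun η : ℝ ↦ (π : ℂ) / (η - Complex.I * r)) 0 :=
      continuousAt_const.div (by fun_prop) (by simp [hr₀])
    simpa only [Complex.ofReal_zero, zero_sub, ← neg_mul, hbase] using this.tendsto
  have hslit : ((π / r : ℝ) * Complex.I) ∈ Complex.slitPlane := by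
    right
    simp [hr.ne', pi_ne_zero]
  rw [← Complex.ofReal_div, ← Real.sqrt_div pi_nonneg, ← ofReal_mul_I_cpow_half (by positivity)]
  exact hlim.cpow tendsto_const_nhds hslit

end InvSqrt

section Fourier

open scoped FourierTransform ContDiff

variable {E F : Type*} [NormedAddCommGroup E] [InnerProductSpace ℝ E] [FiniteDimensional ℝ E]
  [MeasurableSpace E] [BorelSpace E] [NormedAddCommGroup F] [NormedSpace ℂ F]

theorem integrable_fourier_of_contDiff_of_hasCompactSupport {f : E → F}
    (hf : ContDiff ℝ ∞ f) (hsupp : HasCompactSupport f) : Integrable (𝓕 f) :=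
  (𝓕 (hsupp.toSchwartzMap hf)).integrable

theorem integral_integral_mul_exp_neg_I_inner {S : E → ℂ} {y : E} (hS : Integrable S)
    (hSF : Integrable (𝓕 S)) (hy : ContinuousAt S y) :
    ∫ x : E, ∫ z, S z * Complex.exp (-Complex.I * ⟪x, z - y⟫) =
      (2 * π) ^ Module.finrank ℝ E * S y := by
  have hphase (v z : E) : Complex.exp ((2 * π * ⟪v, y⟫ : ℝ) * Complex.I) •
      Complex.exp ((-2 * π * ⟪z, v⟫ : ℝ) * Complex.I) • S z =
      S z * Complex.exp (-Complex.I * ⟪(2 * π) • v, z - y⟫) := by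
    rw [smul_smul, ← Complex.exp_add, smul_eq_mul, mul_comm, real_inner_smul_left, inner_sub_right,
      real_inner_comm z v]
    push_cast
    ring_nf
  have hinv : S y = ∫ v : E, ∫ z, S z * Complex.exp (-Complex.I * ⟪(2 * π) • v, z - y⟫) := by
    rw [← hS.fourierInv_fourier_eq hSF hy, Real.fourierInv_eq']
    simp only [Real.fourier_eq', ← integral_smul, hphase]
  have hscale : (2 * π) ^ Module.finrank ℝ E ≠ 0 := by positivity
  rw [hinv, Measure.integral_comp_smul_of_nonneg volume
    (fun x ↦ ∫ z, S z * Complex.exp (-Complex.I * ⟪x, z - y⟫)) _ (hR := by positivity),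
    Complex.real_smul, ← mul_assoc]
  norm_cast
  rw [mul_inv_cancel₀ hscale, Complex.ofReal_one, one_mul]

end Fourier

section Constants

theorem reconstruction_constant_mul_eq_one (d : ℕ) :
    Complex.exp (-Complex.I * π / 4) * (2 * √(2 * π) / (2 * π) ^ d : ℝ) *
      ((1 / (2 * √2 * π) : ℝ) * √π * Complex.exp (Complex.I * π / 4) * (2 * π) ^ d) = 1 := by
  have hphase : Complex.exp (-Complex.I * π / 4) * Complex.exp (Complex.I * π / 4) = 1 := by
    rw [← Complex.exp_add, neg_mul, neg_div, neg_add_cancel, Complex.exp_zero]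
  have hmodulus : 2 * √(2 * π) / (2 * π) ^ d * (1 / (2 * √2 * π) * √π * (2 * π) ^ d) = 1 := by
    rw [Real.sqrt_mul zero_le_two]
    field_simp
    exact Real.sq_sqrt pi_nonneg
  calc _ = (Complex.exp (-Complex.I * π / 4) * Complex.exp (Complex.I * π / 4)) *
        (2 * √(2 * π) / (2 * π) ^ d * (1 / (2 * √2 * π) * √π * (2 * π) ^ d) : ℝ) := by
        push_cast
        ring
    _ = 1 := by rw [hphase, hmodulus, Complex.ofReal_one, one_mul]

theorem two_mul_sqrt_two_mul_pi_div_two_mul_pi_sq :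
    2 * √(2 * π) / (2 * π) ^ 2 = 1 / √(2 * π ^ 3) := by
  have hsqrt : √(2 * π ^ 3) = π * √(2 * π) := by
    rw [show 2 * π ^ 3 = π ^ 2 * (2 * π) by ring, Real.sqrt_mul (sq_nonneg π),
      Real.sqrt_sq pi_nonneg]
  rw [hsqrt]
  field_simp
  rw [Real.sq_sqrt (by positivity)]

end Constants

section FarField

open scoped FourierTransform

variable {E : Type*} [NormedAddCommGroup E] [InnerProductSpace ℝ E] [FiniteDimensional ℝ E]
  [MeasurableSpace E] [BorelSpace E] {S : E → ℂ}

/-- The far-field pattern, in direction `u` and at time `t`, of the wave field generated by the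
initial velocity `S`, with the kernel of the two-dimensional wave equation. The restriction to
`0 < t + ⟪u, z⟫` is implicit: elsewhere `√` and then its inverse are `0`. -/
noncomputable def farFieldPattern (S : E → ℂ) (u : E) (t : ℝ) : ℂ :=
  (1 / (2 * √2 * π) : ℝ) * ∫ z, ((√(t + ⟪u, z⟫))⁻¹ : ℂ) * S z

theorem ofReal_integral_ite_eq_farFieldPattern (S : E → ℝ) (u : E) (t : ℝ) :
    ((1 / (2 * √2 * π) * ∫ z, if 0 < t + ⟪u, z⟫ then (√(t + ⟪u, z⟫))⁻¹ * S z else 0 : ℝ) : ℂ) =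
      farFieldPattern (fun z ↦ (S z : ℂ)) u t := by
  have hite (z : E) : (if 0 < t + ⟪u, z⟫ then (√(t + ⟪u, z⟫))⁻¹ * S z else 0) =
      (√(t + ⟪u, z⟫))⁻¹ * S z := by
    split_ifs with h
    · rfl
    · simp [Real.sqrt_eq_zero_of_nonpos (not_lt.1 h)]
  simp only [hite, farFieldPattern, Complex.ofReal_mul, ← integral_complex_ofReal,
    Complex.ofReal_inv]

theorem farFieldPattern_sub_inner_mul_exp (S : E → ℂ) (u y : E) (r η t : ℝ) :
    farFieldPattern S u (t - ⟪u, y⟫) * Complex.exp (Complex.I * r * t) * Real.exp (-η * t) =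
      (1 / (2 * √2 * π) : ℝ) * ((∫ z, ((√(t + ⟪u, z - y⟫))⁻¹ : ℂ) * S z) *
        Complex.exp (-(η - Complex.I * r) * t)) := by
  have hexp : Complex.exp (-(η - Complex.I * r) * t) =
      Complex.exp (Complex.I * r * t) * Real.exp (-η * t) := by
    rw [Complex.ofReal_exp, ← Complex.exp_add]
    push_cast
    ring_nf
  have harg (z : E) : t - ⟪u, y⟫ + ⟪u, z⟫ = t + ⟪u, z - y⟫ := by
    rw [inner_sub_right]
    ring
  rw [hexp, farFieldPattern]
  simp only [harg, mul_assoc]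

theorem integrable_mul_exp_inner_sub
    (hS : ∀ w : E, Integrable fun z ↦ S z * Complex.exp ⟪w, z⟫) (u y : E) (b : ℂ) :
    Integrable fun z ↦ S z * Complex.exp (b * ⟪u, z - y⟫) := by
  have hS₀ : Integrable S := by simpa using hS 0
  refine ((hS (b.re • u)).mul_const (Real.exp (-b.re * ⟪u, y⟫) : ℂ)).congr'
    (hS₀.aestronglyMeasurable.mul (by fun_prop)) (.of_forall fun z ↦ ?_)
  simp only [norm_mul, mul_assoc, Complex.norm_exp, Complex.ofReal_re,
    Complex.re_mul_ofReal, Complex.norm_real, Real.norm_eq_abs, Real.abs_exp, ← Real.exp_add,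
    real_inner_smul_left, inner_sub_right]
  ring_nf

theorem integrable_mul_exp_inner_of_hasCompactSupport {f : E → ℂ} (hf : Continuous f)
    (hsupp : HasCompactSupport f) (w : E) : Integrable fun z ↦ f z * Complex.exp ⟪w, z⟫ :=
  (show Continuous _ by fun_prop).integrable_of_hasCompactSupport hsupp.mul_right

theorem integrable_farFieldPattern_mul_exp
    (hS : ∀ w : E, Integrable fun z ↦ S z * Complex.exp ⟪w, z⟫) (u y : E) (r : ℝ) {η : ℝ}
    (hη : 0 < η) :
    Integrable fun t : ℝ ↦ farFieldPattern S u (t - ⟪u, y⟫) *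
      Complex.exp (Complex.I * r * t) * Real.exp (-η * t) := by
  simp only [farFieldPattern_sub_inner_mul_exp]
  exact (integrable_superposition_mul_exp_neg (by fun_prop)
    (integrable_inv_sqrt_mul_exp_neg (by simpa using hη))
    (integrable_mul_exp_inner_sub hS u y _)).const_mul _

theorem integral_farFieldPattern_mul_exp
    (hS : ∀ w : E, Integrable fun z ↦ S z * Complex.exp ⟪w, z⟫) (u y : E) (r : ℝ) {η : ℝ}
    (hη : 0 < η) :
    ∫ t : ℝ, farFieldPattern S u (t - ⟪u, y⟫) *
        Complex.exp (Complex.I * r * t) * Real.exp (-η * t) =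
      (1 / (2 * √2 * π) : ℝ) * ((∫ z, S z * Complex.exp ((η - Complex.I * r) * ⟪u, z - y⟫)) *
        (π / (η - Complex.I * r)) ^ (1 / 2 : ℂ)) := by
  have hb : 0 < ((η : ℂ) - Complex.I * r).re := by simpa using hη
  simp only [farFieldPattern_sub_inner_mul_exp]
  rw [integral_const_mul, integral_superposition_mul_exp_neg (k := fun t ↦ ((√t)⁻¹ : ℂ))
    (by fun_prop) (integrable_inv_sqrt_mul_exp_neg hb) (integrable_mul_exp_inner_sub hS u y _),
    integral_inv_sqrt_mul_exp_neg hb]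

theorem tendsto_integral_farFieldPattern_mul_exp
    (hS : ∀ w : E, Integrable fun z ↦ S z * Complex.exp ⟪w, z⟫) (u y : E) {r : ℝ} (hr : 0 < r) :
    Tendsto (fun η : ℝ ↦ ∫ t : ℝ, farFieldPattern S u (t - ⟪u, y⟫) *
        Complex.exp (Complex.I * r * t) * Real.exp (-η * t)) (𝓝[>] 0)
      (𝓝 ((1 / (2 * √2 * π) : ℝ) * ((∫ z, S z * Complex.exp (-Complex.I * ⟪r • u, z - y⟫)) *
        (√π / √r * Complex.exp (Complex.I * π / 4))))) := by
  have hwave : Tendsto (fun η : ℝ ↦ ∫ z, S z * Complex.exp ((η - Complex.I * r) * ⟪u, z - y⟫))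
      (𝓝[>] 0) (𝓝 (∫ z, S z * Complex.exp (-Complex.I * ⟪r • u, z - y⟫))) := by
    simpa only [real_inner_smul_left, Complex.ofReal_mul, mul_assoc] using
      tendsto_integral_mul_exp_sub_I_mul (by fun_prop)
        (by simpa using hS 0) (by simpa using integrable_mul_exp_inner_sub hS u y 1) r
  refine ((hwave.mul ((tendsto_pi_div_sub_I_mul_cpow_half hr).mono_left
    nhdsWithin_le_nhds)).const_mul _).congr' ?_
  filter_upwards [self_mem_nhdsWithin] with η hη
  exact (integral_farFieldPattern_mul_exp hS u y r hη).symm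

theorem sqrt_norm_mul_limUnder_farFieldPattern
    (hS : ∀ w : E, Integrable fun z ↦ S z * Complex.exp ⟪w, z⟫) (y : E) {x : E} (hx : x ≠ 0) :
    (√‖x‖ : ℂ) * limUnder (𝓝[>] (0 : ℝ)) (fun η : ℝ ↦ ∫ t : ℝ,
        farFieldPattern S (‖x‖⁻¹ • x) (t - ⟪‖x‖⁻¹ • x, y⟫) *
          Complex.exp (Complex.I * ‖x‖ * t) * Real.exp (-η * t)) =
      (1 / (2 * √2 * π) : ℝ) * √π * Complex.exp (Complex.I * π / 4) *
        ∫ z, S z * Complex.exp (-Complex.I * ⟪x, z - y⟫) := by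
  have hnorm : 0 < ‖x‖ := norm_pos_iff.2 hx
  have hsqrt : (√‖x‖ : ℂ) ≠ 0 := by exact_mod_cast (Real.sqrt_pos.2 hnorm).ne'
  rw [(tendsto_integral_farFieldPattern_mul_exp hS _ y hnorm).limUnder_eq,
    smul_inv_smul₀ hnorm.ne']
  field_simp

theorem far_field_reconstruction_2d_general [Nontrivial E]
    (hS : ∀ w : E, Integrable fun z ↦ S z * Complex.exp ⟪w, z⟫) (hSF : Integrable (𝓕 S))
    {y : E} (hy : ContinuousAt S y) :
    (∀ x : E, x ≠ 0 → ∀ η : ℝ, 0 < η →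
        Integrable fun t : ℝ ↦ farFieldPattern S (‖x‖⁻¹ • x) (t - ⟪‖x‖⁻¹ • x, y⟫) *
          Complex.exp (Complex.I * ‖x‖ * t) * Real.exp (-η * t)) ∧
      (∀ x : E, x ≠ 0 → ∃ L : ℂ, Tendsto (fun η : ℝ ↦
        ∫ t : ℝ, farFieldPattern S (‖x‖⁻¹ • x) (t - ⟪‖x‖⁻¹ • x, y⟫) *
          Complex.exp (Complex.I * ‖x‖ * t) * Real.exp (-η * t)) (𝓝[>] 0) (𝓝 L)) ∧
      S y = Complex.exp (-Complex.I * π / 4) *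
          (2 * √(2 * π) / (2 * π) ^ Module.finrank ℝ E : ℝ) *
        ∫ x : E, √‖x‖ * limUnder (𝓝[>] (0 : ℝ)) (fun η : ℝ ↦
          ∫ t : ℝ, farFieldPattern S (‖x‖⁻¹ • x) (t - ⟪‖x‖⁻¹ • x, y⟫) *
            Complex.exp (Complex.I * ‖x‖ * t) * Real.exp (-η * t)) := by
  refine ⟨fun x _ η hη ↦ integrable_farFieldPattern_mul_exp hS _ y _ hη,
    fun x hx ↦ ⟨_, tendsto_integral_farFieldPattern_mul_exp hS _ y (norm_pos_iff.2 hx)⟩, ?_⟩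
  have hcancel := (Measure.ae_ne volume (0 : E)).mono fun x hx ↦
    sqrt_norm_mul_limUnder_farFieldPattern hS y hx
  rw [integral_congr_ae hcancel, integral_const_mul,
    integral_integral_mul_exp_neg_I_inner (by simpa using hS 0) hSF hy, ← mul_assoc, ← mul_assoc,
    mul_assoc _ _ ((2 * π : ℂ) ^ _), reconstruction_constant_mul_eq_one, one_mul]

end FarField

/-- **Far-field reconstruction formula in 2D** (Theorem 3.5, `d = 2`).
Let `S : ℝ² → ℝ` be smooth with compact support and
`p^∞(x̂,t) = (1/(2√2 π)) ∫_{t + x̂·y > 0} (t + x̂·y)^{−1/2} S(y) dy` the 2D time-domain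
far-field pattern. Then for every `y ∈ ℝ²`: for each `x ≠ 0` and each `η > 0` the inner
regularized `t`-integral converges absolutely, the Abel limit as `η → 0⁺` exists, and
`S(y) = (e^{−iπ/4}/√(2π³)) ∫_{ℝ²} √|x| · ( lim_{η→0⁺} ∫_ℝ p^∞(x/|x|, t − (x/|x|)·y)
e^{i|x|t} e^{−ηt} dt ) dx` (the Abel limit being expressed via `Filter.limUnder`). -/
theorem far_field_reconstruction_2d
    (S : EuclideanSpace ℝ (Fin 2) → ℝ)
    (hS : ContDiff ℝ (⊤ : ℕ∞) S) (hsupp : HasCompactSupport S)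
    (pinf : EuclideanSpace ℝ (Fin 2) → ℝ → ℝ)
    (hpinf : ∀ xhat t, pinf xhat t =
      (1 / (2 * Real.sqrt 2 * π)) *
        ∫ z : EuclideanSpace ℝ (Fin 2),
          if 0 < t + ⟪xhat, z⟫ then (Real.sqrt (t + ⟪xhat, z⟫))⁻¹ * S z else 0)
    (y : EuclideanSpace ℝ (Fin 2)) :
    (∀ x : EuclideanSpace ℝ (Fin 2), x ≠ 0 → ∀ η : ℝ, 0 < η →
        Integrable (fun t : ℝ =>
          (pinf (‖x‖⁻¹ • x) (t - ⟪‖x‖⁻¹ • x, y⟫) : ℂ) *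
            Complex.exp (Complex.I * (‖x‖ : ℂ) * (t : ℂ)) * (Real.exp (-η * t) : ℂ))) ∧
      (∀ x : EuclideanSpace ℝ (Fin 2), x ≠ 0 →
        ∃ L : ℂ, Tendsto (fun η : ℝ =>
          ∫ t : ℝ, (pinf (‖x‖⁻¹ • x) (t - ⟪‖x‖⁻¹ • x, y⟫) : ℂ) *
            Complex.exp (Complex.I * (‖x‖ : ℂ) * (t : ℂ)) * (Real.exp (-η * t) : ℂ))
          (𝓝[>] (0 : ℝ)) (𝓝 L)) ∧
      (S y : ℂ) =
        (Complex.exp (-Complex.I * (π : ℂ) / 4) / (Real.sqrt (2 * π ^ 3) : ℂ)) *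
          ∫ x : EuclideanSpace ℝ (Fin 2),
            (Real.sqrt ‖x‖ : ℂ) *
              limUnder (𝓝[>] (0 : ℝ)) (fun η : ℝ =>
                ∫ t : ℝ, (pinf (‖x‖⁻¹ • x) (t - ⟪‖x‖⁻¹ • x, y⟫) : ℂ) *
                  Complex.exp (Complex.I * (‖x‖ : ℂ) * (t : ℂ)) *
                  (Real.exp (-η * t) : ℂ)) := by
  have hSC : ContDiff ℝ (⊤ : ℕ∞) fun z ↦ (S z : ℂ) := Complex.ofRealCLM.contDiff.comp hS
  have hsuppC : HasCompactSupport fun z ↦ (S z : ℂ) := hsupp.comp_left Complex.ofReal_zero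
  simpa only [hpinf, ofReal_integral_ite_eq_farFieldPattern, finrank_euclideanSpace_fin,
    two_mul_sqrt_two_mul_pi_div_two_mul_pi_sq, Complex.ofReal_div, Complex.ofReal_one,
    mul_one_div] using far_field_reconstruction_2d_general
      (integrable_mul_exp_inner_of_hasCompactSupport hSC.continuous hsuppC)
      (integrable_fourier_of_contDiff_of_hasCompactSupport hSC hsuppC)
      hSC.continuous.continuousAt
end

section
/- Let S : ℝ³ → ℝ be smooth with compact support. Let RS(x̂,t) := ∫_{ℝ²} S(−t x̂ + a u + b v) da db denote the planar Radon transform of S (independent of the choice of the orthonormal pair u, v completing the unit vector x̂ to an orthonormal basis of ℝ³), and define the time-domain far-field pattern of the initial displacement source by q^∞(x̂,t) := (1/(4π)) ∂_t RS(x̂,t). Then for every y ∈ ℝ³, S(y) = (1/(2π²)) ∫_{ℝ³} ( ∫_ℝ q^∞(x/|x|, t − (x/|x|)·y) · (i e^{i|x|t}/|x|) dt ) dx, where the inner integral converges absolutely for each x ≠ 0 and the outer integral converges absolutely over ℝ³. -/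
open MeasureTheory Real Filter
open scoped RealInnerProductSpace Topology

/-!
The Fourier slice theorem identifies the one-dimensional Fourier transform of the Radon transform of
`f` in the direction `ω` with the restriction of `𝓕 f` to the line `ℝ ω`. Integrating against
`i e^{i|x|t} / |x|` undoes the time derivative, so with `ω = x / |x|` the inner integral is a
multiple of `e^{i⟨x, y⟩} 𝓕 f (x / 2π)`, and the outer integral is Fourier inversion. Slices of a
Schwartz function by parallel hyperplanes have a common integrable bound, which makes the Radon
transform differentiable.
-/

open Module
open scoped FourierTransform SchwartzMap LineDeriv

section Decomposition

variable {E : Type*} [NormedAddCommGroup E] [InnerProductSpace ℝ E]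

lemma norm_le_norm_add_of_mem_orthogonal {K : Submodule ℝ E} {x w : E} (hx : x ∈ K)
    (hw : w ∈ Kᗮ) : ‖w‖ ≤ ‖x + w‖ := by
  have pythagoras := norm_add_sq_eq_norm_sq_add_norm_sq_real (hw x hx)
  refine (sq_le_sq₀ (norm_nonneg w) (norm_nonneg (x + w))).1 ?_
  nlinarith

variable [FiniteDimensional ℝ E] [MeasurableSpace E] [BorelSpace E] {ω : E}

/-- Orthogonal coordinates on `E` adapted to the unit vector `ω`: `(t, w)` stands for the point
`t • ω + w` of the hyperplane `⟪ω, ·⟫ = t`. -/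
noncomputable def hyperplaneCoordinates (hω : ‖ω‖ = 1) : ℝ × (ℝ ∙ ω)ᗮ ≃ᵐ E :=
  ((LinearIsometryEquiv.toSpanUnitSingleton ω hω).toMeasurableEquiv.prodCongr
    (MeasurableEquiv.refl _)).trans <|
  (MeasurableEquiv.toLp 2 _).trans (ℝ ∙ ω).orthogonalDecomposition.symm.toMeasurableEquiv

lemma hyperplaneCoordinates_apply (hω : ‖ω‖ = 1) (p : ℝ × (ℝ ∙ ω)ᗮ) :
    hyperplaneCoordinates hω p = p.1 • ω + p.2 := by
  simp [hyperplaneCoordinates, MeasurableEquiv.prodCongr]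

lemma measurePreserving_hyperplaneCoordinates (hω : ‖ω‖ = 1) :
    MeasurePreserving (hyperplaneCoordinates hω) :=
  (ℝ ∙ ω).orthogonalDecomposition.symm.measurePreserving.comp <|
    (WithLp.volume_preserving_toLp _ _).comp <|
      (LinearIsometryEquiv.toSpanUnitSingleton ω hω).measurePreserving.prod (.id _)

lemma integral_eq_integral_smul_add_smul {V : Type*} [NormedAddCommGroup V] [NormedSpace ℝ V]
    (b : OrthonormalBasis (Fin 2) ℝ E) (f : E → V) :
    ∫ w, f w = ∫ ab : ℝ × ℝ, f (ab.1 • b 0 + ab.2 • b 1) := by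
  have hb := b.measurePreserving_repr_symm.comp <| (PiLp.volume_preserving_toLp (Fin 2)).comp <|
    (volume_preserving_finTwoArrow ℝ).symm
  let e : ℝ × ℝ ≃ᵐ E := MeasurableEquiv.finTwoArrow.symm.trans <|
    (MeasurableEquiv.toLp 2 (Fin 2 → ℝ)).trans b.repr.symm.toMeasurableEquiv
  rw [← hb.integral_comp e.measurableEmbedding]
  simp [← b.sum_repr_symm, Fin.sum_univ_two, MeasurableEquiv.finTwoArrow]

end Decomposition

section RadonTransform

variable {E : Type*} [NormedAddCommGroup E] [InnerProductSpace ℝ E] [FiniteDimensional ℝ E]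
  [MeasurableSpace E] [BorelSpace E] {V : Type*} [NormedAddCommGroup V] {ω : E}

/-- The Radon transform of `f`, for `‖ω‖ = 1`: the integral of `f` over the hyperplane
`⟪ω, ·⟫ = t`. This is the usual sign convention; the plane transform `RS(ω, t)` of the far-field
formula integrates over `⟪ω, ·⟫ = -t` instead. -/
noncomputable def radonTransform [NormedSpace ℝ V] (f : E → V) (ω : E) (t : ℝ) : V :=
  ∫ w : (ℝ ∙ ω)ᗮ, f (t • ω + w)

lemma radonTransform_eq_integral_prod [NormedSpace ℝ V] (f : E → V)
    (b : OrthonormalBasis (Fin 2) ℝ (ℝ ∙ ω)ᗮ) (t : ℝ) :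
    radonTransform f ω t = ∫ ab : ℝ × ℝ, f (t • ω + ab.1 • (b 0 : E) + ab.2 • (b 1 : E)) := by
  simp [radonTransform, integral_eq_integral_smul_add_smul b, add_assoc]

lemma eq_radonTransform_neg_of_forall_orthonormal [NormedSpace ℝ V] (hE : finrank ℝ E = 3)
    {f : E → V} (hω : ‖ω‖ = 1) {Rf : ℝ → V}
    (hRf : ∀ u v : E, ‖u‖ = 1 → ‖v‖ = 1 → ⟪ω, u⟫ = 0 → ⟪ω, v⟫ = 0 → ⟪u, v⟫ = 0 →
      ∀ t : ℝ, Rf t = ∫ ab : ℝ × ℝ, f ((-t) • ω + ab.1 • u + ab.2 • v)) :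
    Rf = fun t => radonTransform f ω (-t) := by
  have : Fact (finrank ℝ E = 2 + 1) := ⟨hE⟩
  have hω' : ω ≠ 0 := norm_ne_zero_iff.1 (hω ▸ one_ne_zero)
  let b := OrthonormalBasis.fromOrthogonalSpanSingleton (𝕜 := ℝ) 2 hω'
  have inner_eq_zero (i : Fin 2) : ⟪ω, (b i : E)⟫ = 0 :=
    Submodule.mem_orthogonal_singleton_iff_inner_right.1 (b i).2
  funext t
  rw [radonTransform_eq_integral_prod f b]
  exact hRf _ _ (b.norm_eq_one 0) (b.norm_eq_one 1) (inner_eq_zero 0) (inner_eq_zero 1)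
    (b.inner_eq_zero (by decide)) t

lemma radonTransform_ofReal (f : E → ℝ) (t : ℝ) :
    radonTransform (fun x => (f x : ℂ)) ω t = ((radonTransform f ω t : ℝ) : ℂ) :=
  integral_ofReal

lemma integrable_comp_hyperplaneCoordinates {f : E → V} (hf : Integrable f) (hω : ‖ω‖ = 1) :
    Integrable fun p : ℝ × (ℝ ∙ ω)ᗮ => f (p.1 • ω + p.2) := by
  simpa only [Function.comp_def, hyperplaneCoordinates_apply] using
    (measurePreserving_hyperplaneCoordinates hω).integrable_comp_of_integrable hf

lemma integrable_radonTransform [NormedSpace ℝ V] {f : E → V} (hf : Integrable f)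
    (hω : ‖ω‖ = 1) : Integrable (radonTransform f ω) :=
  (integrable_comp_hyperplaneCoordinates hf hω).integral_prod_left

theorem fourier_radonTransform [NormedSpace ℂ V] {f : E → V} (hf : Integrable f)
    (hω : ‖ω‖ = 1) (s : ℝ) : 𝓕 (radonTransform f ω) s = 𝓕 f (s • ω) := by
  have inner_plane (t : ℝ) (w : (ℝ ∙ ω)ᗮ) : ⟪t • ω + w, s • ω⟫ = ⟪t, s⟫ := by
    have hw : ⟪(w : E), ω⟫ = 0 := Submodule.mem_orthogonal_singleton_iff_inner_left.1 w.2
    simp [inner_add_left, inner_smul_left, inner_smul_right, hw, hω]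
  have hint : Integrable fun z : E => 𝐞 (-⟪z, s • ω⟫) • f z :=
    (Real.fourierIntegral_convergent_iff (s • ω)).2 hf
  calc 𝓕 (radonTransform f ω) s
      = ∫ t : ℝ, ∫ w : (ℝ ∙ ω)ᗮ, 𝐞 (-⟪t • ω + w, s • ω⟫) • f (t • ω + w) := by
        simp only [Real.fourier_eq, radonTransform, inner_plane, Circle.smul_def,
          integral_smul]
    _ = ∫ p : ℝ × (ℝ ∙ ω)ᗮ, 𝐞 (-⟪p.1 • ω + p.2, s • ω⟫) • f (p.1 • ω + p.2) :=
        (integral_prod _ (integrable_comp_hyperplaneCoordinates hint hω)).symm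
    _ = 𝓕 f (s • ω) := by
        rw [Real.fourier_eq, ← (measurePreserving_hyperplaneCoordinates hω).integral_comp']
        simp only [hyperplaneCoordinates_apply]

lemma exists_integrable_bound_orthogonal_slices [NormedSpace ℝ V] (f : 𝓢(E, V))
    (K : Submodule ℝ E) :
    ∃ bound : Kᗮ → ℝ, Integrable bound ∧ ∀ x ∈ K, ∀ w : Kᗮ, ‖f (x + w)‖ ≤ bound w := by
  set n := finrank ℝ Kᗮ + 1
  set C := 2 ^ n * (Finset.Iic (n, 0)).sup (fun m => SchwartzMap.seminorm ℝ m.1 m.2) f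
  have decay (z : E) : (1 + ‖z‖) ^ n * ‖f z‖ ≤ C := by
    simpa using SchwartzMap.one_add_le_sup_seminorm_apply (𝕜 := ℝ) (m := (n, 0)) le_rfl le_rfl f z
  refine ⟨fun w => (1 + ‖w‖) ^ (-(n : ℝ)) * C,
    (integrable_one_add_norm (by simp [n])).mul_const C, fun x hx w => ?_⟩
  beta_reduce
  rw [rpow_neg (by positivity), rpow_natCast, ← div_eq_inv_mul, le_div_iff₀' (by positivity)]
  have hxw : ‖w‖ ≤ ‖x + w‖ := norm_le_norm_add_of_mem_orthogonal hx w.2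
  exact le_trans (by gcongr) (decay (x + w))

theorem hasDerivAt_radonTransform [NormedSpace ℝ V] (f : 𝓢(E, V)) (ω : E) (t : ℝ) :
    HasDerivAt (radonTransform f ω) (radonTransform (∂_{ω} f : 𝓢(E, V)) ω t) t := by
  have measurable_slice (g : 𝓢(E, V)) (s : ℝ) :
      AEStronglyMeasurable fun w : (ℝ ∙ ω)ᗮ => g (s • ω + w) :=
    Continuous.aestronglyMeasurable (by fun_prop)
  have smul_mem (s : ℝ) : s • ω ∈ ℝ ∙ ω :=
    Submodule.smul_mem _ s (Submodule.mem_span_singleton_self ω)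
  obtain ⟨bound, bound_integrable, hbound⟩ := exists_integrable_bound_orthogonal_slices f (ℝ ∙ ω)
  obtain ⟨derivBound, derivBound_integrable, hderivBound⟩ :=
    exists_integrable_bound_orthogonal_slices (∂_{ω} f) (ℝ ∙ ω)
  refine (hasDerivAt_integral_of_dominated_loc_of_deriv_le univ_mem
    (.of_forall (measurable_slice f))
    (bound_integrable.mono' (measurable_slice f t) (.of_forall (hbound _ (smul_mem t))))
    (measurable_slice (∂_{ω} f) t)
    (.of_forall fun w s _ => hderivBound _ (smul_mem s) w) derivBound_integrable
    (.of_forall fun w s _ => ?_)).2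
  rw [SchwartzMap.lineDerivOp_apply_eq_fderiv]
  have line : HasDerivAt (fun s : ℝ => s • ω + (w : E)) ω s := by
    simpa using ((hasDerivAt_id s).smul_const ω).add_const (w : E)
  exact (f.hasFDerivAt _).comp_hasDerivAt s line

lemma differentiable_radonTransform [NormedSpace ℝ V] (f : 𝓢(E, V)) (ω : E) :
    Differentiable ℝ (radonTransform f ω) :=
  fun t => (hasDerivAt_radonTransform f ω t).differentiableAt

lemma integrable_deriv_radonTransform [NormedSpace ℝ V] (f : 𝓢(E, V)) (hω : ‖ω‖ = 1) :
    Integrable (deriv (radonTransform f ω)) := by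
  rw [funext fun t => (hasDerivAt_radonTransform f ω t).deriv]
  exact integrable_radonTransform (SchwartzMap.integrable _) hω

lemma ofReal_deriv_radonTransform_comp_neg (f : 𝓢(E, ℝ)) (ω : E) (t : ℝ) :
    (deriv (fun s => radonTransform f ω (-s)) t : ℝ) =
      deriv (fun s => radonTransform (f.postcompCLM Complex.ofRealCLM) ω (-s)) t := by
  have radon_ofReal : radonTransform (f.postcompCLM Complex.ofRealCLM) ω =
      fun s => ((radonTransform f ω s : ℝ) : ℂ) := funext (radonTransform_ofReal f)
  have hdiff : Differentiable ℝ fun s => radonTransform f ω (-s) :=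
    (differentiable_radonTransform f ω).comp differentiable_neg
  rw [radon_ofReal]
  exact (hdiff t).hasDerivAt.ofReal_comp.deriv.symm

end RadonTransform

section Reconstruction

variable {V : Type*} [NormedAddCommGroup V] [NormedSpace ℂ V]

lemma smul_deriv_comp_neg_eq_fourierChar_smul (g : ℝ → V) (r c t : ℝ) :
    (Complex.I * Complex.exp (Complex.I * r * t) / r) • deriv (fun s => g (-s)) (t - c) =
      (-(Complex.I / r) * Complex.exp (Complex.I * r * c)) •
        𝐞 (-⟪c - t, r / (2 * π)⟫) • deriv g (c - t) := by
  have phase : Complex.exp (Complex.I * r * t) =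
      Complex.exp (Complex.I * r * c) * 𝐞 (-⟪c - t, r / (2 * π)⟫) := by
    rw [Real.fourierChar_apply, ← Complex.exp_add]
    congr 1
    simp only [RCLike.inner_apply, conj_trivial]
    push_cast
    field_simp
    ring
  rw [deriv_comp_neg, neg_sub, smul_neg, ← neg_smul, phase, Circle.smul_def, smul_smul]
  congr 1
  ring

lemma integrable_smul_deriv_comp_neg {g : ℝ → V} (hg' : Integrable (deriv g)) (r c : ℝ) :
    Integrable fun t : ℝ =>
      (Complex.I * Complex.exp (Complex.I * r * t) / r) • deriv (fun s => g (-s)) (t - c) := by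
  simp only [smul_deriv_comp_neg_eq_fourierChar_smul]
  exact (((Real.fourierIntegral_convergent_iff (r / (2 * π))).2 hg').comp_sub_left c).smul _

lemma integral_smul_deriv_comp_neg {g : ℝ → V} (hg : Integrable g) (hdiff : Differentiable ℝ g)
    (hg' : Integrable (deriv g)) {r : ℝ} (hr : r ≠ 0) (c : ℝ) :
    ∫ t : ℝ, (Complex.I * Complex.exp (Complex.I * r * t) / r) • deriv (fun s => g (-s)) (t - c) =
      Complex.exp (Complex.I * r * c) • 𝓕 g (r / (2 * π)) := by
  simp only [smul_deriv_comp_neg_eq_fourierChar_smul]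
  rw [integral_smul,
    integral_sub_left_eq_self (fun s => 𝐞 (-⟪s, r / (2 * π)⟫) • deriv g s) volume c,
    ← Real.fourier_eq, Real.fourier_deriv hg hdiff hg', smul_smul]
  congr 1
  have hr' : (r : ℂ) ≠ 0 := mod_cast hr
  push_cast
  field_simp
  simp only [Complex.I_sq, neg_neg]

variable {E : Type*} [NormedAddCommGroup E] [InnerProductSpace ℝ E] [FiniteDimensional ℝ E]
  [MeasurableSpace E] [BorelSpace E]

lemma integrable_exp_smul_fourier {f : E → V} (hf : Integrable (𝓕 f)) (y : E) :
    Integrable fun x : E => Complex.exp (Complex.I * ⟪x, y⟫) • 𝓕 f ((2 * π)⁻¹ • x) := by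
  have hscale : Integrable fun x : E => 𝓕 f ((2 * π)⁻¹ • x) := hf.comp_smul (by positivity)
  refine hscale.bdd_smul 1 (Continuous.aestronglyMeasurable (by fun_prop)) ?_
  exact .of_forall fun x => (Complex.norm_exp_I_mul_ofReal _).le

lemma integral_exp_smul_fourier [CompleteSpace V] {f : E → V} (hcont : Continuous f)
    (hint : Integrable f) (hf : Integrable (𝓕 f)) (y : E) :
    ∫ x : E, Complex.exp (Complex.I * ⟪x, y⟫) • 𝓕 f ((2 * π)⁻¹ • x) =
      (2 * π) ^ finrank ℝ E • f y := by
  have inversion : ∫ w, Complex.exp (↑(2 * π * ⟪w, y⟫) * Complex.I) • 𝓕 f w = f y := by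
    rw [← Real.fourierInv_eq', hcont.fourierInv_fourier_eq hint hf]
  rw [← inversion, ← Measure.integral_comp_inv_smul_of_nonneg volume _ (by positivity)]
  congr 1 with x
  congr 2
  rw [real_inner_smul_left]
  push_cast
  field_simp

lemma integral_smul_deriv_radonTransform_comp_neg (f : 𝓢(E, V)) {x : E} (hx : x ≠ 0) (y : E) :
    ∫ t : ℝ, (Complex.I * Complex.exp (Complex.I * ‖x‖ * t) / ‖x‖) •
        deriv (fun s => radonTransform f (‖x‖⁻¹ • x) (-s)) (t - ⟪‖x‖⁻¹ • x, y⟫) =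
      Complex.exp (Complex.I * ⟪x, y⟫) • 𝓕 (f : E → V) ((2 * π)⁻¹ • x) := by
  have hx' : ‖x‖ ≠ 0 := norm_ne_zero_iff.2 hx
  have hω : ‖‖x‖⁻¹ • x‖ = 1 := norm_smul_inv_norm hx
  have frequency : (‖x‖ / (2 * π)) • ‖x‖⁻¹ • x = (2 * π)⁻¹ • x := by
    rw [smul_smul]
    congr 1
    field_simp
  have phase : ‖x‖ * ⟪‖x‖⁻¹ • x, y⟫ = ⟪x, y⟫ := by
    rw [real_inner_smul_left, mul_inv_cancel_left₀ hx']
  rw [integral_smul_deriv_comp_neg (integrable_radonTransform f.integrable hω)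
    (differentiable_radonTransform f _) (integrable_deriv_radonTransform f hω) hx',
    fourier_radonTransform f.integrable hω, frequency, mul_assoc, ← Complex.ofReal_mul, phase]

theorem far_field_reconstruction_displacement_3d_general [CompleteSpace V] [Nontrivial E]
    (f : 𝓢(E, V)) {c : ℂ} (hc : c ≠ 0) (q : E → ℝ → V)
    (hq : ∀ ω, ‖ω‖ = 1 → ∀ t, q ω t = c • deriv (fun s => radonTransform f ω (-s)) t) (y : E) :
    (∀ x : E, x ≠ 0 → Integrable fun t : ℝ =>
        (Complex.I * Complex.exp (Complex.I * ‖x‖ * t) / ‖x‖) •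
          q (‖x‖⁻¹ • x) (t - ⟪‖x‖⁻¹ • x, y⟫)) ∧
      Integrable (fun x : E => ∫ t : ℝ,
        (Complex.I * Complex.exp (Complex.I * ‖x‖ * t) / ‖x‖) •
          q (‖x‖⁻¹ • x) (t - ⟪‖x‖⁻¹ • x, y⟫)) ∧
      f y = (c * (2 * π) ^ finrank ℝ E)⁻¹ • ∫ x : E, ∫ t : ℝ,
        (Complex.I * Complex.exp (Complex.I * ‖x‖ * t) / ‖x‖) •
          q (‖x‖⁻¹ • x) (t - ⟪‖x‖⁻¹ • x, y⟫) := by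
  have integrand_eq (x : E) (hx : x ≠ 0) (t : ℝ) :
      (Complex.I * Complex.exp (Complex.I * ‖x‖ * t) / ‖x‖) •
          q (‖x‖⁻¹ • x) (t - ⟪‖x‖⁻¹ • x, y⟫) =
        c • (Complex.I * Complex.exp (Complex.I * ‖x‖ * t) / ‖x‖) •
          deriv (fun s => radonTransform f (‖x‖⁻¹ • x) (-s)) (t - ⟪‖x‖⁻¹ • x, y⟫) := by
    have hω : ‖‖x‖⁻¹ • x‖ = 1 := norm_smul_inv_norm hx
    rw [hq _ hω, smul_comm]
  have inner_integral_eq : (fun x : E => ∫ t : ℝ,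
        (Complex.I * Complex.exp (Complex.I * ‖x‖ * t) / ‖x‖) •
          q (‖x‖⁻¹ • x) (t - ⟪‖x‖⁻¹ • x, y⟫)) =ᵐ[volume]
      fun x => c • Complex.exp (Complex.I * ⟪x, y⟫) • 𝓕 (f : E → V) ((2 * π)⁻¹ • x) := by
    filter_upwards [volume.ae_ne 0] with x hx
    simp only [integrand_eq x hx]
    rw [integral_smul, integral_smul_deriv_radonTransform_comp_neg f hx]
  have hf : Integrable (𝓕 (f : E → V)) := (𝓕 f).integrable
  refine ⟨fun x hx => ?_, ?_, ?_⟩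
  · simp only [integrand_eq x hx]
    exact (integrable_smul_deriv_comp_neg
      (integrable_deriv_radonTransform f (norm_smul_inv_norm hx)) _ _).smul c
  · exact ((integrable_exp_smul_fourier hf y).smul c).congr inner_integral_eq.symm
  · rw [integral_congr_ae inner_integral_eq, integral_smul,
      integral_exp_smul_fourier f.continuous f.integrable hf, ← Complex.coe_smul, smul_smul c]
    push_cast
    rw [inv_smul_smul₀ (by simp [hc, pi_ne_zero])]

end Reconstruction

/-- **Far-field reconstruction of the initial displacement in 3D** (Theorem A.2).
Let `S : ℝ³ → ℝ` be smooth with compact support, `RS(x̂,t)` its planar Radon transform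
(the integral of `S` over the plane `{x̂·y = −t}`, independent of the orthonormal pair
`u, v` completing `x̂`), and `q^∞(x̂,t) = (1/(4π)) ∂_t RS(x̂,t)` the time-domain far-field
pattern of the initial displacement source. Then for every `y ∈ ℝ³`, the inner
`t`-integral converges absolutely for each `x ≠ 0`, the outer `x`-integral converges
absolutely, and
`S(y) = (1/(2π²)) ∫_{ℝ³} ∫_ℝ q^∞(x/|x|, t − (x/|x|)·y) · (i e^{i|x|t}/|x|) dt dx`. -/
theorem far_field_reconstruction_displacement_3d
    (S : EuclideanSpace ℝ (Fin 3) → ℝ)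
    (hS : ContDiff ℝ (⊤ : ℕ∞) S) (hsupp : HasCompactSupport S)
    (RS : EuclideanSpace ℝ (Fin 3) → ℝ → ℝ)
    (hRS : ∀ xhat : EuclideanSpace ℝ (Fin 3), ‖xhat‖ = 1 →
      ∀ u v : EuclideanSpace ℝ (Fin 3), ‖u‖ = 1 → ‖v‖ = 1 →
        ⟪xhat, u⟫ = 0 → ⟪xhat, v⟫ = 0 → ⟪u, v⟫ = 0 →
          ∀ t : ℝ, RS xhat t =
            ∫ ab : ℝ × ℝ, S ((-t) • xhat + ab.1 • u + ab.2 • v))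
    (qinf : EuclideanSpace ℝ (Fin 3) → ℝ → ℝ)
    (hqinf : ∀ xhat t, qinf xhat t = (1 / (4 * π)) * deriv (RS xhat) t)
    (y : EuclideanSpace ℝ (Fin 3)) :
    (∀ x : EuclideanSpace ℝ (Fin 3), x ≠ 0 →
        Integrable (fun t : ℝ =>
          (qinf (‖x‖⁻¹ • x) (t - ⟪‖x‖⁻¹ • x, y⟫) : ℂ) *
            (Complex.I * Complex.exp (Complex.I * (‖x‖ : ℂ) * (t : ℂ)) / (‖x‖ : ℂ)))) ∧
      Integrable (fun x : EuclideanSpace ℝ (Fin 3) =>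
        ∫ t : ℝ, (qinf (‖x‖⁻¹ • x) (t - ⟪‖x‖⁻¹ • x, y⟫) : ℂ) *
          (Complex.I * Complex.exp (Complex.I * (‖x‖ : ℂ) * (t : ℂ)) / (‖x‖ : ℂ))) ∧
      (S y : ℂ) = (1 / (2 * (π : ℂ) ^ 2)) *
        ∫ x : EuclideanSpace ℝ (Fin 3),
          ∫ t : ℝ, (qinf (‖x‖⁻¹ • x) (t - ⟪‖x‖⁻¹ • x, y⟫) : ℂ) *
            (Complex.I * Complex.exp (Complex.I * (‖x‖ : ℂ) * (t : ℂ)) / (‖x‖ : ℂ)) := by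
  let f := hsupp.toSchwartzMap hS
  have hRS_eq (ω) (hω : ‖ω‖ = 1) : RS ω = fun t => radonTransform f ω (-t) :=
    eq_radonTransform_neg_of_forall_orthonormal finrank_euclideanSpace_fin hω (hRS ω hω)
  have constant_eq : (1 / (4 * π) * (2 * π) ^ 3 : ℂ)⁻¹ = 1 / (2 * π ^ 2) := by
    field_simp
    norm_num
  have reconstruction := far_field_reconstruction_displacement_3d_general
    (f.postcompCLM Complex.ofRealCLM) (by simp [pi_ne_zero] : (1 / (4 * π) : ℂ) ≠ 0)
    (fun ω t => (qinf ω t : ℂ))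
    (fun ω hω t => by simp [hqinf, hRS_eq ω hω, ofReal_deriv_radonTransform_comp_neg]) y
  simp only [finrank_euclideanSpace_fin, constant_eq, smul_eq_mul,
    mul_comm _ (qinf _ _ : ℂ)] at reconstruction
  exact reconstruction
end

section
/- Let S : ℝ³ → ℝ be continuous with compact support. Then for every y ∈ ℝ³, lim_{ε→0⁺} (1/(2π²)) ∫_0^∞ k e^{−εk} ( ∫_{ℝ³} (sin(k|y−z|)/|y−z|) S(z) dz ) dk = S(y), where at z = y the integrand sin(k|y−z|)/|y−z| is interpreted by continuity as k. -/
open MeasureTheory Real Filter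
open scoped RealInnerProductSpace Topology

/-!
For `ε > 0` the `k`-integral can be carried out first: taking imaginary parts in
`∫₀^∞ k e^{-(ε - ir)k} dk = (ε - ir)⁻²` gives
`∫₀^∞ k² e^{-εk} sinc(kr) dk = 2ε / (ε² + r²)²`.
Up to the factor `2π²`, the right-hand side with `r = ‖x‖` is the Poisson kernel of the half-space
over a three-dimensional space, so the regularized integral is the Poisson extension of `S` at
height `ε`, which tends to `S y` because the Poisson kernel is an approximate identity.
-/

section LaplaceTransform

theorem integrableOn_pow_mul_exp_neg_mul_Ioi (n : ℕ) {ε : ℝ} (hε : 0 < ε) :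
    IntegrableOn (fun k : ℝ ↦ k ^ n * exp (-ε * k)) (Set.Ioi 0) := by
  have hn : (-1 : ℝ) < n := neg_one_lt_zero.trans_le n.cast_nonneg
  simpa only [rpow_natCast, rpow_one] using
    integrableOn_rpow_mul_exp_neg_mul_rpow hn one_pos hε

theorem norm_pow_mul_cexp_neg_mul (n : ℕ) (z : ℂ) (k : ℝ) :
    ‖(k : ℂ) ^ n * Complex.exp (-z * k)‖ = |k| ^ n * exp (-z.re * k) := by
  simp [Complex.norm_exp]

theorem integrableOn_pow_mul_cexp_neg_mul_Ioi (n : ℕ) {z : ℂ} (hz : 0 < z.re) :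
    IntegrableOn (fun k : ℝ ↦ (k : ℂ) ^ n * Complex.exp (-z * k)) (Set.Ioi 0) := by
  refine (integrableOn_pow_mul_exp_neg_mul_Ioi n hz).mono'
    (Continuous.aestronglyMeasurable (by fun_prop)) ?_
  filter_upwards [ae_restrict_mem measurableSet_Ioi] with k hk
  rw [norm_pow_mul_cexp_neg_mul, abs_of_pos hk]

theorem tendsto_pow_mul_cexp_neg_mul_atTop (n : ℕ) {z : ℂ} (hz : 0 < z.re) :
    Tendsto (fun k : ℝ ↦ (k : ℂ) ^ n * Complex.exp (-z * k)) atTop (𝓝 0) := by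
  rw [tendsto_zero_iff_norm_tendsto_zero]
  have h := tendsto_rpow_mul_exp_neg_mul_atTop_nhds_zero n z.re hz
  simp only [rpow_natCast] at h
  refine h.congr' ?_
  filter_upwards [eventually_ge_atTop 0] with k hk
  rw [norm_pow_mul_cexp_neg_mul, abs_of_nonneg hk]

theorem hasDerivAt_pow_succ_mul_cexp_neg_mul (n : ℕ) (z : ℂ) (k : ℝ) :
    HasDerivAt (fun k : ℝ ↦ (k : ℂ) ^ (n + 1) * Complex.exp (-z * k))
      ((n + 1) * ((k : ℂ) ^ n * Complex.exp (-z * k)) -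
        z * ((k : ℂ) ^ (n + 1) * Complex.exp (-z * k))) k := by
  have hexp : HasDerivAt (fun w : ℂ ↦ Complex.exp (-z * w)) (Complex.exp (-z * k) * -z) k := by
    simpa using ((hasDerivAt_id (k : ℂ)).const_mul (-z)).cexp
  refine ((hasDerivAt_pow (n + 1) (k : ℂ)).mul hexp).comp_ofReal.congr_deriv ?_
  simp only [Nat.cast_add, Nat.cast_one, Nat.add_sub_cancel]
  ring

theorem integral_pow_mul_cexp_neg_mul_Ioi (n : ℕ) {z : ℂ} (hz : 0 < z.re) :
    ∫ k in Set.Ioi (0 : ℝ), (k : ℂ) ^ n * Complex.exp (-z * k) = n.factorial / z ^ (n + 1) := by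
  have hz0 : z ≠ 0 := fun h ↦ by simp [h] at hz
  induction n with
  | zero =>
    simpa using integral_exp_mul_complex_Ioi (a := -z) (by simpa using hz) 0
  | succ n ih =>
    have hn := (integrableOn_pow_mul_cexp_neg_mul_Ioi n hz).const_mul ((n : ℂ) + 1)
    have hn' := (integrableOn_pow_mul_cexp_neg_mul_Ioi (n + 1) hz).const_mul z
    have by_parts := integral_Ioi_of_hasDerivAt_of_tendsto'
      (fun k (_ : k ∈ Set.Ici 0) ↦ hasDerivAt_pow_succ_mul_cexp_neg_mul n z k)
      (hn.sub hn') (tendsto_pow_mul_cexp_neg_mul_atTop (n + 1) hz)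
    rw [integral_sub hn hn', integral_const_mul, integral_const_mul, ih] at by_parts
    simp only [Complex.ofReal_zero, ne_eq, Nat.add_eq_zero_iff, one_ne_zero, and_false,
      not_false_eq_true, zero_pow, zero_mul, sub_zero, sub_eq_zero] at by_parts
    rw [eq_div_iff (pow_ne_zero _ hz0), pow_succ' z (n + 1), ← mul_assoc, mul_comm _ z, ← by_parts,
      Nat.factorial_succ]
    push_cast
    field_simp

theorem integral_mul_exp_neg_mul_sin_Ioi {ε : ℝ} (hε : 0 < ε) (r : ℝ) :
    ∫ k in Set.Ioi (0 : ℝ), k * exp (-ε * k) * sin (k * r)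
      = 2 * ε * r / (ε ^ 2 + r ^ 2) ^ 2 := by
  have hz : 0 < (⟨ε, -r⟩ : ℂ).re := hε
  have him (k : ℝ) : k * exp (-ε * k) * sin (k * r)
      = ((k : ℂ) ^ 1 * Complex.exp (-⟨ε, -r⟩ * k)).im := by
    simp [Complex.exp_im, mul_comm r, mul_assoc]
  calc ∫ k in Set.Ioi (0 : ℝ), k * exp (-ε * k) * sin (k * r)
      = (∫ k in Set.Ioi (0 : ℝ), (k : ℂ) ^ 1 * Complex.exp (-⟨ε, -r⟩ * k)).im := by
        simp only [him]
        exact integral_im (integrableOn_pow_mul_cexp_neg_mul_Ioi 1 hz)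
    _ = (1 / (⟨ε, -r⟩ : ℂ) ^ 2).im := by
        rw [integral_pow_mul_cexp_neg_mul_Ioi 1 hz]
        simp
    _ = 2 * ε * r / (ε ^ 2 + r ^ 2) ^ 2 := by
        rw [one_div, Complex.inv_im, map_pow, Complex.normSq_mk, sq (⟨ε, -r⟩ : ℂ), Complex.mul_im]
        ring

theorem mul_sinc_mul_eq_sin_div (k : ℝ) {r : ℝ} (hr : r ≠ 0) :
    k * sinc (k * r) = sin (k * r) / r := by
  rcases eq_or_ne k 0 with rfl | hk
  · simp
  · rw [sinc_of_ne_zero (mul_ne_zero hk hr)]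
    field_simp

theorem integral_sq_mul_exp_neg_mul_sinc_Ioi {ε : ℝ} (hε : 0 < ε) (r : ℝ) :
    ∫ k in Set.Ioi (0 : ℝ), k ^ 2 * exp (-ε * k) * sinc (k * r)
      = 2 * ε / (ε ^ 2 + r ^ 2) ^ 2 := by
  rcases eq_or_ne r 0 with rfl | hr
  · have hGamma : ∫ k in Set.Ioi (0 : ℝ), k ^ 2 * exp (-(ε * k)) = (ε ^ 3)⁻¹ * 2 := by
      have h := integral_rpow_mul_exp_neg_mul_Ioi (a := 3) three_pos hε
      norm_num [Gamma_ofNat_eq_factorial] at h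
      exact h
    simp only [mul_zero, sinc_zero, mul_one, neg_mul, hGamma]
    field_simp
    ring
  · have hsin (k : ℝ) : k ^ 2 * exp (-ε * k) * sinc (k * r)
        = k * exp (-ε * k) * sin (k * r) / r := by
      rw [mul_div_assoc, ← mul_sinc_mul_eq_sin_div k hr]
      ring
    simp only [hsin, integral_div]
    rw [integral_mul_exp_neg_mul_sin_Ioi hε]
    field_simp

end LaplaceTransform

section PoissonKernel

theorem hasDerivAt_arctan_sub_div_one_add_sq (r : ℝ) :
    HasDerivAt (fun r : ℝ ↦ (arctan r - r / (1 + r ^ 2)) / 2) (r ^ 2 / (1 + r ^ 2) ^ 2) r := by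
  have hden_ne : 1 + r ^ 2 ≠ 0 := by positivity
  have hden : HasDerivAt (fun r : ℝ ↦ 1 + r ^ 2) (2 * r) r := by
    simpa using (hasDerivAt_pow 2 r).const_add 1
  have hquot := (hasDerivAt_id r).div hden hden_ne
  refine (((hasDerivAt_arctan r).sub hquot).div_const 2).congr_deriv ?_
  simp only [id]
  field_simp
  ring

theorem tendsto_div_one_add_sq_atTop :
    Tendsto (fun r : ℝ ↦ r / (1 + r ^ 2)) atTop (𝓝 0) := by
  refine squeeze_zero' ?_ ?_ tendsto_inv_atTop_zero
  · filter_upwards [eventually_ge_atTop 0] with r hr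
    positivity
  · filter_upwards [eventually_gt_atTop 0] with r hr
    rw [div_le_iff₀ (by positivity)]
    field_simp
    linarith

theorem integral_sq_div_one_add_sq_sq_Ioi :
    ∫ r in Set.Ioi (0 : ℝ), r ^ 2 / (1 + r ^ 2) ^ 2 = π / 4 := by
  have hlim : Tendsto (fun r : ℝ ↦ (arctan r - r / (1 + r ^ 2)) / 2) atTop
      (𝓝 ((π / 2 - 0) / 2)) :=
    ((tendsto_arctan_atTop.mono_right nhdsWithin_le_nhds).sub
      tendsto_div_one_add_sq_atTop).div_const 2
  rw [integral_Ioi_of_hasDerivAt_of_nonneg' (fun r _ ↦ hasDerivAt_arctan_sub_div_one_add_sq r)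
    (fun r _ ↦ by positivity) hlim]
  rw [arctan_zero, zero_div, sub_zero, sub_zero, zero_div, sub_zero, div_div]
  norm_num

/-- The Poisson kernel at height `ε` of the half-space `V × (0, ∞)` over a three-dimensional
Euclidean space `V`. The normalizing constant is that of dimension three, whatever `V` is. -/
noncomputable def poissonKernelDimThree {V : Type*} [NormedAddCommGroup V] (ε : ℝ) (x : V) : ℝ :=
  ε / (π ^ 2 * (ε ^ 2 + ‖x‖ ^ 2) ^ 2)

theorem poissonKernelDimThree_nonneg {V : Type*} [NormedAddCommGroup V] {ε : ℝ} (hε : 0 ≤ ε)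
    (x : V) : 0 ≤ poissonKernelDimThree ε x := by
  unfold poissonKernelDimThree
  positivity

theorem poissonKernelDimThree_eq_dilation {V : Type*} [NormedAddCommGroup V] [NormedSpace ℝ V]
    {ε : ℝ} (hε : 0 < ε) (x : V) :
    poissonKernelDimThree ε x = ε⁻¹ ^ 3 * poissonKernelDimThree 1 (ε⁻¹ • x) := by
  simp only [poissonKernelDimThree, norm_smul, norm_inv, norm_of_nonneg hε.le]
  field_simp

theorem tendsto_norm_pow_three_mul_poissonKernelDimThree_one {V : Type*} [NormedAddCommGroup V] :
    Tendsto (fun x : V ↦ ‖x‖ ^ 3 * poissonKernelDimThree 1 x) (Bornology.cobounded V) (𝓝 0) := by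
  have hbound := tendsto_div_one_add_sq_atTop.comp (tendsto_norm_cobounded_atTop (E := V))
  refine squeeze_zero (fun x ↦ mul_nonneg (by positivity)
    (poissonKernelDimThree_nonneg zero_le_one x)) (fun x ↦ ?_) hbound
  have hπ : 1 ≤ π ^ 2 := one_le_pow₀ (by linarith [pi_gt_three])
  calc ‖x‖ ^ 3 * poissonKernelDimThree 1 x
      = ‖x‖ / (1 + ‖x‖ ^ 2) * (‖x‖ ^ 2 / (π ^ 2 * (1 + ‖x‖ ^ 2))) := by
        rw [poissonKernelDimThree, one_pow]
        field_simp
    _ ≤ ‖x‖ / (1 + ‖x‖ ^ 2) :=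
        mul_le_of_le_one_right (by positivity) <| div_le_one_of_le₀ (by nlinarith) (by positivity)

variable {V : Type*} [NormedAddCommGroup V] [InnerProductSpace ℝ V] [FiniteDimensional ℝ V]
  [MeasurableSpace V] [BorelSpace V]

theorem volume_real_ball_one_of_finrank_eq_three (hV : Module.finrank ℝ V = 3) (x : V) :
    volume.real (Metric.ball x 1) = 4 / 3 * π := by
  rw [measureReal_def, InnerProductSpace.volume_ball_of_dim_odd (k := 1) hV, hV]
  simp only [ENNReal.ofReal_one, one_pow, one_mul, pow_one, Nat.doubleFactorial]
  rw [ENNReal.toReal_ofReal (by positivity)]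
  norm_num
  ring

theorem integral_poissonKernelDimThree_one (hV : Module.finrank ℝ V = 3) :
    ∫ x : V, poissonKernelDimThree 1 x = 1 := by
  have : Nontrivial V := Module.nontrivial_of_finrank_pos (R := ℝ) (by lia)
  calc ∫ x : V, poissonKernelDimThree 1 x
      = ∫ x : V, (π ^ 2)⁻¹ * (1 / (1 + ‖x‖ ^ 2) ^ 2) := by
        simp only [poissonKernelDimThree, one_pow, one_div, mul_inv]
    _ = (π ^ 2)⁻¹ * (3 * (4 / 3 * π * ∫ r in Set.Ioi (0 : ℝ), r ^ 2 / (1 + r ^ 2) ^ 2)) := by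
        rw [integral_const_mul,
          integral_fun_norm_addHaar volume fun r : ℝ ↦ 1 / (1 + r ^ 2) ^ 2, hV,
          volume_real_ball_one_of_finrank_eq_three hV]
        simp only [nsmul_eq_mul, smul_eq_mul, mul_one_div, Nat.cast_ofNat, Nat.add_one_sub_one]
    _ = 1 := by
        rw [integral_sq_div_one_add_sq_sq_Ioi]
        field_simp

theorem tendsto_integral_poissonKernelDimThree_smul {E : Type*} [NormedAddCommGroup E]
    [NormedSpace ℝ E] [CompleteSpace E] (hV : Module.finrank ℝ V = 3) {S : V → E} {y : V}
    (hS : Integrable S) (hy : ContinuousAt S y) :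
    Tendsto (fun ε : ℝ ↦ ∫ z, poissonKernelDimThree ε (y - z) • S z) (𝓝[>] 0) (𝓝 (S y)) := by
  have happrox := tendsto_integral_comp_smul_smul_of_integrable' (μ := volume)
    (poissonKernelDimThree_nonneg zero_le_one) (integral_poissonKernelDimThree_one hV)
    (by simpa only [hV] using tendsto_norm_pow_three_mul_poissonKernelDimThree_one) hS hy
  refine (happrox.comp tendsto_inv_nhdsGT_zero).congr' ?_
  filter_upwards [self_mem_nhdsWithin] with ε hε
  simp only [Function.comp_apply, hV, ← poissonKernelDimThree_eq_dilation hε]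

end PoissonKernel

section SineKernel

variable {V E : Type*} [NormedAddCommGroup V] [NormedAddCommGroup E] [NormedSpace ℝ E]

theorem ite_sin_norm_div_norm_eq_mul_sinc [DecidableEq V] (k : ℝ) (y z : V) :
    (if y = z then k else sin (k * ‖y - z‖) / ‖y - z‖) = k * sinc (k * ‖y - z‖) := by
  split_ifs with h
  · simp [h]
  · rw [mul_sinc_mul_eq_sin_div k (norm_ne_zero_iff.2 (sub_ne_zero.2 h))]

variable [MeasurableSpace V] [BorelSpace V] [SecondCountableTopology V] {μ : Measure V}
  {S : V → E}

theorem integrable_sq_mul_exp_neg_mul_sinc_smul (hS : Integrable S μ) (y : V) {ε : ℝ}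
    (hε : 0 < ε) :
    Integrable (fun p : ℝ × V ↦ (p.1 ^ 2 * exp (-ε * p.1) * sinc (p.1 * ‖y - p.2‖)) • S p.2)
      ((volume.restrict (Set.Ioi 0)).prod μ) := by
  have hprod := (integrableOn_pow_mul_exp_neg_mul_Ioi 2 hε).integrable.smul_prod hS
  have hsinc : Continuous fun p : ℝ × V ↦ sinc (p.1 * ‖y - p.2‖) := by fun_prop
  refine (hprod.bdd_smul 1 hsinc.aestronglyMeasurable
    (.of_forall fun p ↦ abs_sinc_le_one _)).congr (.of_forall fun p ↦ ?_)
  simp only [Pi.smul_apply', smul_smul]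
  ring_nf

theorem integral_sq_mul_exp_neg_smul_integral_sinc_smul [CompleteSpace E] [SFinite μ]
    (hS : Integrable S μ) (y : V) {ε : ℝ} (hε : 0 < ε) :
    ∫ k in Set.Ioi (0 : ℝ), (k ^ 2 * exp (-ε * k)) • ∫ z, sinc (k * ‖y - z‖) • S z ∂μ
      = (2 * π ^ 2) • ∫ z, poissonKernelDimThree ε (y - z) • S z ∂μ := by
  calc ∫ k in Set.Ioi (0 : ℝ), (k ^ 2 * exp (-ε * k)) • ∫ z, sinc (k * ‖y - z‖) • S z ∂μ
      = ∫ k in Set.Ioi (0 : ℝ), ∫ z,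
          (k ^ 2 * exp (-ε * k) * sinc (k * ‖y - z‖)) • S z ∂μ := by
        simp only [← integral_smul, smul_smul]
    _ = ∫ z, (∫ k in Set.Ioi (0 : ℝ), k ^ 2 * exp (-ε * k) * sinc (k * ‖y - z‖)) • S z ∂μ := by
        rw [integral_integral_swap (integrable_sq_mul_exp_neg_mul_sinc_smul hS y hε)]
        simp only [integral_smul_const]
    _ = (2 * π ^ 2) • ∫ z, poissonKernelDimThree ε (y - z) • S z ∂μ := by
        rw [← integral_smul]
        congr! 2 with z
        rw [integral_sq_mul_exp_neg_mul_sinc_Ioi hε, smul_smul, poissonKernelDimThree]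
        field_simp

end SineKernel

theorem abel_sine_kernel_inversion_3d_general {V E : Type*} [NormedAddCommGroup V]
    [InnerProductSpace ℝ V] [FiniteDimensional ℝ V] [MeasurableSpace V] [BorelSpace V]
    [DecidableEq V] [NormedAddCommGroup E] [NormedSpace ℝ E] [CompleteSpace E]
    (hV : Module.finrank ℝ V = 3) {S : V → E} {y : V} (hS : Integrable S) (hy : ContinuousAt S y) :
    Tendsto (fun ε : ℝ ↦
        (1 / (2 * π ^ 2)) •
          ∫ k in Set.Ioi (0 : ℝ), (k * exp (-ε * k)) •
            ∫ z, (if y = z then k else sin (k * ‖y - z‖) / ‖y - z‖) • S z)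
      (𝓝[>] 0) (𝓝 (S y)) := by
  refine (tendsto_integral_poissonKernelDimThree_smul hV hS hy).congr' ?_
  filter_upwards [self_mem_nhdsWithin] with ε hε
  have hsinc (k : ℝ) :
      (k * exp (-ε * k)) • ∫ z, (if y = z then k else sin (k * ‖y - z‖) / ‖y - z‖) • S z
        = (k ^ 2 * exp (-ε * k)) • ∫ z, sinc (k * ‖y - z‖) • S z := by
    simp only [ite_sin_norm_div_norm_eq_mul_sinc, ← integral_smul, smul_smul]
    ring_nf
  simp only [hsinc]
  rw [integral_sq_mul_exp_neg_smul_integral_sinc_smul hS y hε, smul_smul,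
    one_div_mul_cancel (by positivity), one_smul]

open Classical in

/-- **Abel-regularized sine-kernel inversion in 3D** (key identity in the proof of
Theorem 2.2). Let `S : ℝ³ → ℝ` be continuous with compact support. Then for every
`y ∈ ℝ³`,
`lim_{ε→0⁺} (1/(2π²)) ∫_0^∞ k e^{−εk} ∫_{ℝ³} (sin(k|y−z|)/|y−z|) S(z) dz dk = S(y)`,
the integrand at `z = y` being interpreted by continuity as `k`. -/
theorem abel_sine_kernel_inversion_3d
    (S : EuclideanSpace ℝ (Fin 3) → ℝ)
    (hS : Continuous S) (hsupp : HasCompactSupport S)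
    (y : EuclideanSpace ℝ (Fin 3)) :
    Tendsto (fun ε : ℝ =>
        (1 / (2 * π ^ 2)) *
          ∫ k in Set.Ioi (0 : ℝ), k * Real.exp (-ε * k) *
            ∫ z : EuclideanSpace ℝ (Fin 3),
              (if y = z then k else Real.sin (k * ‖y - z‖) / ‖y - z‖) * S z)
      (𝓝[>] (0 : ℝ)) (𝓝 (S y)) := by
  simpa only [smul_eq_mul] using abel_sine_kernel_inversion_3d_general finrank_euclideanSpace_fin
    (hS.integrable_of_hasCompactSupport hsupp) (hS.continuousAt (x := y))
end

section
/- Define J₀ : ℝ → ℝ by the integral representation J₀(s) := (1/π) ∫_0^π cos(s sin θ) dθ (the Bessel function of the first kind of order zero). Let S : ℝ² → ℝ be continuous with compact support. Then for every y ∈ ℝ², lim_{ε→0⁺} (1/(2π)) ∫_0^∞ k e^{−εk} ( ∫_{ℝ²} J₀(k|y−z|) S(z) dz ) dk = S(y). -/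
open MeasureTheory Real Filter
open scoped RealInnerProductSpace Topology

/-- The Bessel function of the first kind of order zero, defined by the integral
representation `J₀(s) = (1/π) ∫_0^π cos(s sin θ) dθ`. -/
noncomputable def besselJ0 (s : ℝ) : ℝ :=
  (1 / π) * ∫ θ in (0 : ℝ)..π, Real.cos (s * Real.sin θ)

/-!
The Abel means of the Bessel kernel are a Poisson kernel:
`(1 / 2π) ∫_0^∞ k e^{-εk} J₀(kr) dk = ε / (2π (ε² + r²)^{3/2})`,
which is the Poisson kernel of a three-dimensional half-space, at height `ε` and horizontal distance
`r`. It is obtained by inserting the integral representation of `J₀`, integrating in `k` first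
(the real part of `∫_0^∞ k e^{-(ε - ia)k} dk = (ε - ia)⁻²` with `a = r sin θ`) and then in `θ`.
By Fubini the regularized integral is the Poisson extension of `S` evaluated at `(y, ε)`, and the
Poisson kernels are the dilations of a single nonnegative function of integral one, so they form an
approximate identity as `ε → 0⁺`.
-/

lemma integrableOn_mul_exp_neg_mul_Ioi {ε : ℝ} (hε : 0 < ε) :
    IntegrableOn (fun k : ℝ => k * exp (-ε * k)) (Set.Ioi 0) := by
  simpa using integrableOn_rpow_mul_exp_neg_mul_rpow (p := 1) (s := 1) (b := ε)
    (by norm_num) one_pos hε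

lemma norm_mul_cexp_neg_mul_ofReal (z : ℂ) {k : ℝ} (hk : 0 ≤ k) :
    ‖(k : ℂ) * Complex.exp (-z * k)‖ = k * exp (-z.re * k) := by
  simp [Complex.norm_exp, abs_of_nonneg hk]

lemma integrableOn_mul_cexp_neg_mul_Ioi {z : ℂ} (hz : 0 < z.re) :
    IntegrableOn (fun k : ℝ => (k : ℂ) * Complex.exp (-z * k)) (Set.Ioi 0) := by
  refine (integrableOn_mul_exp_neg_mul_Ioi hz).mono' (by fun_prop) ?_
  filter_upwards [ae_restrict_mem measurableSet_Ioi] with k hk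
  exact (norm_mul_cexp_neg_mul_ofReal z (le_of_lt hk)).le

lemma tendsto_mul_cexp_neg_mul_atTop {z : ℂ} (hz : 0 < z.re) :
    Tendsto (fun k : ℝ => (k : ℂ) * Complex.exp (-z * k)) atTop (𝓝 0) := by
  rw [tendsto_zero_iff_norm_tendsto_zero]
  have hreal : Tendsto (fun k : ℝ => k * exp (-z.re * k)) atTop (𝓝 0) := by
    simpa using tendsto_rpow_mul_exp_neg_mul_atTop_nhds_zero 1 z.re hz
  refine hreal.congr' ?_
  filter_upwards [eventually_ge_atTop 0] with k hk
  exact (norm_mul_cexp_neg_mul_ofReal z hk).symm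

lemma tendsto_cexp_neg_mul_atTop {z : ℂ} (hz : 0 < z.re) :
    Tendsto (fun k : ℝ => Complex.exp (-z * k)) atTop (𝓝 0) := by
  rw [Complex.tendsto_exp_nhds_zero_iff]
  simpa using tendsto_id.const_mul_atTop hz

lemma integral_mul_cexp_neg_mul_Ioi {z : ℂ} (hz : 0 < z.re) :
    ∫ k in Set.Ioi (0 : ℝ), (k : ℂ) * Complex.exp (-z * k) = 1 / z ^ 2 := by
  have hz0 : z ≠ 0 := by rintro rfl; simp at hz
  let F : ℝ → ℂ := fun k =>
    -(1 / z) * (k * Complex.exp (-z * k)) - 1 / z ^ 2 * Complex.exp (-z * k)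
  have hderiv : ∀ k ∈ Set.Ici (0 : ℝ), HasDerivAt F (k * Complex.exp (-z * k)) k := by
    intro k _
    have hid : HasDerivAt (fun k : ℝ => (k : ℂ)) 1 k := Complex.ofRealCLM.hasDerivAt
    have hexp := (hid.const_mul (-z)).cexp
    refine (((hid.mul hexp).const_mul _).sub (hexp.const_mul _)).congr_deriv ?_
    field_simp
    ring
  have hlim : Tendsto F atTop (𝓝 0) := by
    simpa only [mul_zero, sub_zero] using
      ((tendsto_mul_cexp_neg_mul_atTop hz).const_mul (-(1 / z))).sub
        ((tendsto_cexp_neg_mul_atTop hz).const_mul (1 / z ^ 2))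
  rw [integral_Ioi_of_hasDerivAt_of_tendsto' hderiv (integrableOn_mul_cexp_neg_mul_Ioi hz) hlim]
  simp [F]

lemma integral_mul_exp_neg_mul_mul_cos_Ioi {ε : ℝ} (hε : 0 < ε) (a : ℝ) :
    ∫ k in Set.Ioi (0 : ℝ), k * exp (-ε * k) * cos (k * a)
      = (ε ^ 2 - a ^ 2) / (ε ^ 2 + a ^ 2) ^ 2 := by
  let z : ℂ := ⟨ε, -a⟩
  have hre : ∀ k : ℝ, k * exp (-ε * k) * cos (k * a)
      = RCLike.re ((k : ℂ) * Complex.exp (-z * k)) := fun k => by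
    simp [z, Complex.exp_re, mul_assoc, mul_comm a k]
  simp_rw [hre]
  rw [integral_re (integrableOn_mul_cexp_neg_mul_Ioi (z := z) hε),
    integral_mul_cexp_neg_mul_Ioi (z := z) hε]
  have hz : 1 / z ^ 2 = (starRingEnd ℂ z / Complex.normSq z) ^ 2 := by
    rw [one_div, ← inv_pow, Complex.inv_def, div_eq_mul_inv, Complex.ofReal_inv]
  rw [hz, div_pow, ← Complex.ofReal_pow, RCLike.re_eq_complex_re, Complex.div_ofReal_re]
  simp [z, pow_two, Complex.normSq_apply]

section AngularIntegral

variable {p q : ℝ}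

lemma mul_cos_sq_add_mul_sin_sq_pos (hp : 0 < p) (hq : 0 < q) (θ : ℝ) :
    0 < p * cos θ ^ 2 + q * sin θ ^ 2 := by
  have hmin : 0 < min p q := lt_min hp hq
  calc 0 < min p q * (cos θ ^ 2 + sin θ ^ 2) := by simpa using hmin
    _ ≤ p * cos θ ^ 2 + q * sin θ ^ 2 := by
      rw [mul_add]
      gcongr
      exacts [min_le_left _ _, min_le_right _ _]

lemma hasDerivAt_sin_mul_cos (θ : ℝ) :
    HasDerivAt (fun t => sin t * cos t) (cos θ ^ 2 - sin θ ^ 2) θ :=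
  ((hasDerivAt_sin θ).mul (hasDerivAt_cos θ)).congr_deriv (by ring)

lemma hasDerivAt_mul_cos_sq_add_mul_sin_sq (p q θ : ℝ) :
    HasDerivAt (fun t => p * cos t ^ 2 + q * sin t ^ 2) (2 * (q - p) * (sin θ * cos θ)) θ :=
  ((((hasDerivAt_cos θ).pow 2).const_mul p).add
    (((hasDerivAt_sin θ).pow 2).const_mul q)).congr_deriv (by push_cast; ring)

-- The primitive `arctan ((q / p) * tan t)` jumps at `π / 2`. Writing it as `t` plus the difference
-- `arctan ((q / p) * tan t) - arctan (tan t)`, combined by the addition formula, removes the jump.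
lemma hasDerivAt_add_arctan_div (hp : 0 < p) (hq : 0 < q) (θ : ℝ) :
    HasDerivAt
      (fun t => t + arctan ((q - p) * (sin t * cos t) / (p * cos t ^ 2 + q * sin t ^ 2)))
      (p * q / (p ^ 2 * cos θ ^ 2 + q ^ 2 * sin θ ^ 2)) θ := by
  have hden := mul_cos_sq_add_mul_sin_sq_pos hp hq θ
  have hden_sq := mul_cos_sq_add_mul_sin_sq_pos (pow_pos hp 2) (pow_pos hq 2) θ
  have hcos : cos θ ^ 2 = 1 - sin θ ^ 2 := cos_sq' θ
  have hone_add_sq :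
      1 + ((q - p) * (sin θ * cos θ) / (p * cos θ ^ 2 + q * sin θ ^ 2)) ^ 2
        = (p ^ 2 * cos θ ^ 2 + q ^ 2 * sin θ ^ 2) / (p * cos θ ^ 2 + q * sin θ ^ 2) ^ 2 := by
    field_simp
    simp only [hcos]
    ring
  refine ((hasDerivAt_id θ).add (((hasDerivAt_sin_mul_cos θ).const_mul (q - p)).div
    (hasDerivAt_mul_cos_sq_add_mul_sin_sq p q θ) hden.ne').arctan).congr_deriv ?_
  simp only [Pi.div_apply]
  rw [hone_add_sq]
  field_simp
  simp only [hcos]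
  ring

lemma hasDerivAt_sin_mul_cos_div (hp : 0 < p) (hq : 0 < q) (θ : ℝ) :
    HasDerivAt (fun t => sin t * cos t / (p * cos t ^ 2 + q * sin t ^ 2))
      ((p * cos θ ^ 2 - q * sin θ ^ 2) / (p * cos θ ^ 2 + q * sin θ ^ 2) ^ 2) θ := by
  have hden := mul_cos_sq_add_mul_sin_sq_pos hp hq θ
  refine ((hasDerivAt_sin_mul_cos θ).div
    (hasDerivAt_mul_cos_sq_add_mul_sin_sq p q θ) hden.ne').congr_deriv ?_
  congr 1
  linear_combination (p * cos θ ^ 2 - q * sin θ ^ 2) * sin_sq_add_cos_sq θ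

lemma integral_sq_sub_mul_sin_sq_div_sq_add_mul_sin_sq_sq {ε : ℝ} (hε : 0 < ε) (r : ℝ) :
    ∫ θ in (0 : ℝ)..π, (ε ^ 2 - (r * sin θ) ^ 2) / (ε ^ 2 + (r * sin θ) ^ 2) ^ 2
      = π * ε / √(ε ^ 2 + r ^ 2) ^ 3 := by
  set q := √(ε ^ 2 + r ^ 2)
  have hq : 0 < q := sqrt_pos.2 (by positivity)
  have hr : r ^ 2 = q ^ 2 - ε ^ 2 := by rw [sq_sqrt (by positivity)]; ring
  -- The coefficients solve `ε² - r² sin² = A (ε² cos² + q² sin²) + B (ε² cos² - q² sin²)`.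
  have hderiv (θ : ℝ) :=
    ((hasDerivAt_add_arctan_div hε hq θ).const_mul (ε / q ^ 3)).add
      ((hasDerivAt_sin_mul_cos_div (pow_pos hε 2) (pow_pos hq 2) θ).const_mul (1 - ε ^ 2 / q ^ 2))
  have hintegrand (θ : ℝ) :
      ε / q ^ 3 * (ε * q / (ε ^ 2 * cos θ ^ 2 + q ^ 2 * sin θ ^ 2))
        + (1 - ε ^ 2 / q ^ 2) * ((ε ^ 2 * cos θ ^ 2 - q ^ 2 * sin θ ^ 2) /
          (ε ^ 2 * cos θ ^ 2 + q ^ 2 * sin θ ^ 2) ^ 2)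
      = (ε ^ 2 - (r * sin θ) ^ 2) / (ε ^ 2 + (r * sin θ) ^ 2) ^ 2 := by
    have hden := mul_cos_sq_add_mul_sin_sq_pos (pow_pos hε 2) (pow_pos hq 2) θ
    have hadd : ε ^ 2 + (r * sin θ) ^ 2 = ε ^ 2 * cos θ ^ 2 + q ^ 2 * sin θ ^ 2 := by
      rw [mul_pow, hr, cos_sq']; ring
    rw [hadd]
    field_simp
    rw [hr, cos_sq']; ring
  have hcont : Continuous fun θ =>
      (ε ^ 2 - (r * sin θ) ^ 2) / (ε ^ 2 + (r * sin θ) ^ 2) ^ 2 :=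
    Continuous.div (by fun_prop) (by fun_prop) fun θ => by positivity
  rw [intervalIntegral.integral_eq_sub_of_hasDerivAt
    (fun θ _ => (hderiv θ).congr_deriv (hintegrand θ)) (hcont.intervalIntegrable 0 π)]
  simp [mul_comm π, div_mul_eq_mul_div]

end AngularIntegral

lemma continuous_besselJ0 : Continuous besselJ0 := by
  unfold besselJ0
  exact continuous_const.mul <|
    intervalIntegral.continuous_parametric_intervalIntegral_of_continuous' (by fun_prop) 0 π

lemma abs_besselJ0_le_one (s : ℝ) : |besselJ0 s| ≤ 1 := by
  have hint : |∫ θ in (0 : ℝ)..π, cos (s * sin θ)| ≤ π := by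
    simpa [abs_of_pos pi_pos] using intervalIntegral.norm_integral_le_of_norm_le_const
      (a := 0) (b := π) (C := 1) (f := fun θ => cos (s * sin θ)) fun θ _ => abs_cos_le_one _
  rw [besselJ0, abs_mul, abs_of_pos (by positivity : 0 < 1 / π), one_div,
    inv_mul_le_one₀ pi_pos]
  exact hint

section PoissonKernel

/-- The Poisson kernel of a three-dimensional half-space, as a function of the height `ε` above the
boundary plane and the horizontal distance `r`; the Abel means of the Bessel kernel are identified
with it. -/
noncomputable def halfSpacePoissonKernel (ε r : ℝ) : ℝ :=
  ε / (2 * π * √(ε ^ 2 + r ^ 2) ^ 3)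

variable {ε : ℝ}

lemma halfSpacePoissonKernel_nonneg (hε : 0 ≤ ε) (r : ℝ) :
    0 ≤ halfSpacePoissonKernel ε r := by
  unfold halfSpacePoissonKernel
  positivity

lemma halfSpacePoissonKernel_eq_inv_sq_mul (hε : 0 < ε) (r : ℝ) :
    halfSpacePoissonKernel ε r = ε⁻¹ ^ 2 * halfSpacePoissonKernel 1 (ε⁻¹ * r) := by
  have hsqrt : √(ε ^ 2 + r ^ 2) = ε * √(1 ^ 2 + (ε⁻¹ * r) ^ 2) := by
    rw [← sqrt_sq hε.le, ← sqrt_mul (by positivity), sqrt_sq hε.le]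
    congr 1
    field_simp
  rw [halfSpacePoissonKernel, halfSpacePoissonKernel, hsqrt]
  field_simp

lemma sq_mul_halfSpacePoissonKernel_le (hε : 0 ≤ ε) {r : ℝ} (hr : 0 < r) :
    r ^ 2 * halfSpacePoissonKernel ε r ≤ ε / (2 * π) * r⁻¹ := by
  have hsqrt : r ≤ √(ε ^ 2 + r ^ 2) := le_sqrt_of_sq_le (by linarith [sq_nonneg ε])
  calc r ^ 2 * (ε / (2 * π * √(ε ^ 2 + r ^ 2) ^ 3)) ≤ r ^ 2 * (ε / (2 * π * r ^ 3)) := by gcongr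
    _ = ε / (2 * π) * r⁻¹ := by field_simp

lemma tendsto_sq_mul_halfSpacePoissonKernel_atTop (hε : 0 ≤ ε) :
    Tendsto (fun r => r ^ 2 * halfSpacePoissonKernel ε r) atTop (𝓝 0) := by
  refine squeeze_zero' (.of_forall fun r => ?_) ?_
    (by simpa using tendsto_inv_atTop_zero.const_mul (ε / (2 * π)))
  · exact mul_nonneg (sq_nonneg r) (halfSpacePoissonKernel_nonneg hε r)
  · filter_upwards [eventually_gt_atTop 0] with r hr
    exact sq_mul_halfSpacePoissonKernel_le hε hr

lemma hasDerivAt_neg_mul_inv_sqrt_sq_add_sq (hε : ε ≠ 0) (r : ℝ) :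
    HasDerivAt (fun t => -(ε / (2 * π)) * (√(ε ^ 2 + t ^ 2))⁻¹)
      (r * halfSpacePoissonKernel ε r) r := by
  have hpos : 0 < ε ^ 2 + r ^ 2 := by positivity
  have hsqrt : 0 < √(ε ^ 2 + r ^ 2) := sqrt_pos.2 hpos
  have hsq : HasDerivAt (fun t => ε ^ 2 + t ^ 2) (2 * r) r := by
    simpa using (hasDerivAt_pow 2 r).const_add (ε ^ 2)
  refine (((hsq.sqrt hpos.ne').inv hsqrt.ne').const_mul _).congr_deriv ?_
  rw [halfSpacePoissonKernel]
  field_simp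

lemma tendsto_sqrt_sq_add_sq_atTop (ε : ℝ) :
    Tendsto (fun r => √(ε ^ 2 + r ^ 2)) atTop atTop :=
  tendsto_sqrt_atTop.comp <|
    tendsto_atTop_add_const_left _ _ (tendsto_pow_atTop two_ne_zero)

lemma integral_mul_halfSpacePoissonKernel_Ioi (hε : 0 < ε) :
    ∫ r in Set.Ioi (0 : ℝ), r * halfSpacePoissonKernel ε r = 1 / (2 * π) := by
  have hlim : Tendsto (fun r => -(ε / (2 * π)) * (√(ε ^ 2 + r ^ 2))⁻¹) atTop (𝓝 0) := by
    simpa using (tendsto_sqrt_sq_add_sq_atTop ε).inv_tendsto_atTop.const_mul (-(ε / (2 * π)))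
  rw [integral_Ioi_of_hasDerivAt_of_nonneg'
    (fun r _ => hasDerivAt_neg_mul_inv_sqrt_sq_add_sq hε.ne' r)
    (fun r hr => mul_nonneg (le_of_lt hr) (halfSpacePoissonKernel_nonneg hε.le r)) hlim,
    zero_pow two_ne_zero, add_zero, sqrt_sq hε.le]
  field_simp
  ring

end PoissonKernel

lemma integral_mul_exp_neg_mul_mul_besselJ0_Ioi {ε : ℝ} (hε : 0 < ε) (r : ℝ) :
    ∫ k in Set.Ioi (0 : ℝ), k * exp (-ε * k) * besselJ0 (k * r)
      = 2 * π * halfSpacePoissonKernel ε r := by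
  have hint : Integrable
      (Function.uncurry fun k θ : ℝ => k * exp (-ε * k) * cos (k * (r * sin θ)))
      ((volume.restrict (Set.Ioi 0)).prod (volume.restrict (Set.Ioc 0 π))) :=
    ((integrableOn_mul_exp_neg_mul_Ioi hε).integrable.comp_fst _).mul_bdd (c := 1)
      (Continuous.aestronglyMeasurable (by fun_prop)) (.of_forall fun _ => abs_cos_le_one _)
  have hbessel (k : ℝ) : k * exp (-ε * k) * besselJ0 (k * r)
      = 1 / π * ∫ θ in Set.Ioc 0 π, k * exp (-ε * k) * cos (k * (r * sin θ)) := by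
    simp_rw [besselJ0, intervalIntegral.integral_of_le pi_pos.le, integral_const_mul,
      mul_assoc k r, mul_left_comm (1 / π)]
  calc ∫ k in Set.Ioi (0 : ℝ), k * exp (-ε * k) * besselJ0 (k * r)
    _ = 1 / π * ∫ θ in Set.Ioc 0 π, ∫ k in Set.Ioi (0 : ℝ),
          k * exp (-ε * k) * cos (k * (r * sin θ)) := by
        simp_rw [hbessel]
        rw [integral_const_mul, integral_integral_swap hint]
    _ = 1 / π * ∫ θ in (0 : ℝ)..π,
          (ε ^ 2 - (r * sin θ) ^ 2) / (ε ^ 2 + (r * sin θ) ^ 2) ^ 2 := by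
        simp_rw [integral_mul_exp_neg_mul_mul_cos_Ioi hε,
          intervalIntegral.integral_of_le pi_pos.le]
    _ = 2 * π * halfSpacePoissonKernel ε r := by
        rw [integral_sq_sub_mul_sin_sq_div_sq_add_mul_sin_sq_sq hε, halfSpacePoissonKernel]
        field_simp

lemma integral_mul_exp_neg_mul_smul_integral_besselJ0_smul
    {X E : Type*} [MeasurableSpace X] {μ : Measure X} [SFinite μ]
    [NormedAddCommGroup E] [NormedSpace ℝ E] [CompleteSpace E]
    {ε : ℝ} (hε : 0 < ε) {d : X → ℝ} (hd : Measurable d) {S : X → E} (hS : Integrable S μ) :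
    ∫ k in Set.Ioi (0 : ℝ), (k * exp (-ε * k)) • ∫ x, besselJ0 (k * d x) • S x ∂μ
      = (2 * π) • ∫ x, halfSpacePoissonKernel ε (d x) • S x ∂μ := by
  have hint : Integrable
      (Function.uncurry fun k x => besselJ0 (k * d x) • (k * exp (-ε * k)) • S x)
      ((volume.restrict (Set.Ioi 0)).prod μ) :=
    ((integrableOn_mul_exp_neg_mul_Ioi hε).integrable.smul_prod hS).bdd_smul 1
      (continuous_besselJ0.measurable.comp (by fun_prop)).aestronglyMeasurable
      (.of_forall fun _ => abs_besselJ0_le_one _)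
  calc ∫ k in Set.Ioi (0 : ℝ), (k * exp (-ε * k)) • ∫ x, besselJ0 (k * d x) • S x ∂μ
    _ = ∫ x, (∫ k in Set.Ioi (0 : ℝ), besselJ0 (k * d x) • (k * exp (-ε * k)) • S x) ∂μ := by
        rw [← integral_integral_swap hint]
        simp_rw [← integral_smul, smul_comm (besselJ0 _)]
    _ = ∫ x, (2 * π) • halfSpacePoissonKernel ε (d x) • S x ∂μ := by
        simp_rw [smul_smul, mul_comm (besselJ0 _), integral_smul_const,
          integral_mul_exp_neg_mul_mul_besselJ0_Ioi hε]
    _ = (2 * π) • ∫ x, halfSpacePoissonKernel ε (d x) • S x ∂μ := integral_smul _ _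

section Plane

variable {V E : Type*} [NormedAddCommGroup V] [InnerProductSpace ℝ V] [FiniteDimensional ℝ V]
  [MeasurableSpace V] [BorelSpace V] [NormedAddCommGroup E] [NormedSpace ℝ E] [CompleteSpace E]

lemma volume_real_ball_zero_one_of_finrank_eq_two (hV : Module.finrank ℝ V = 2) :
    volume.real (Metric.ball (0 : V) 1) = π := by
  have : Nontrivial V := Module.nontrivial_of_finrank_pos (R := ℝ) (by omega)
  simp [Measure.real, InnerProductSpace.volume_ball_of_dim_even (k := 1) hV, pi_pos.le]

lemma integral_halfSpacePoissonKernel_norm (hV : Module.finrank ℝ V = 2) {ε : ℝ} (hε : 0 < ε) :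
    ∫ x : V, halfSpacePoissonKernel ε ‖x‖ = 1 := by
  have : Nontrivial V := Module.nontrivial_of_finrank_pos (R := ℝ) (by omega)
  rw [integral_fun_norm_addHaar volume (halfSpacePoissonKernel ε), hV,
    volume_real_ball_zero_one_of_finrank_eq_two hV]
  simp only [Nat.add_one_sub_one, pow_one, smul_eq_mul, nsmul_eq_mul,
    integral_mul_halfSpacePoissonKernel_Ioi hε]
  field_simp
  norm_num

lemma tendsto_integral_halfSpacePoissonKernel_smul (hV : Module.finrank ℝ V = 2)
    {S : V → E} (hS : Integrable S) {y : V} (hy : ContinuousAt S y) :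
    Tendsto (fun ε : ℝ => ∫ z, halfSpacePoissonKernel ε ‖y - z‖ • S z) (𝓝[>] 0) (𝓝 (S y)) := by
  have hdecay : Tendsto (fun x : V => ‖x‖ ^ Module.finrank ℝ V * halfSpacePoissonKernel 1 ‖x‖)
      (Bornology.cobounded V) (𝓝 0) := by
    rw [hV]
    exact (tendsto_sq_mul_halfSpacePoissonKernel_atTop zero_le_one).comp
      tendsto_norm_cobounded_atTop
  have hdilation := (tendsto_integral_comp_smul_smul_of_integrable'
    (fun x => halfSpacePoissonKernel_nonneg zero_le_one ‖x‖)
    (integral_halfSpacePoissonKernel_norm hV one_pos) hdecay hS hy).comp tendsto_inv_nhdsGT_zero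
  refine hdilation.congr' ?_
  filter_upwards [self_mem_nhdsWithin] with ε hε
  have hinv : 0 ≤ ε⁻¹ := inv_nonneg.2 (le_of_lt hε)
  simp only [Function.comp_apply, hV, norm_smul, norm_of_nonneg hinv,
    ← halfSpacePoissonKernel_eq_inv_sq_mul hε]

theorem abel_bessel_kernel_inversion_2d_general (hV : Module.finrank ℝ V = 2)
    {S : V → E} (hS : Integrable S) {y : V} (hy : ContinuousAt S y) :
    Tendsto (fun ε : ℝ =>
        (1 / (2 * π)) • ∫ k in Set.Ioi (0 : ℝ), (k * exp (-ε * k)) •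
          ∫ z, besselJ0 (k * ‖y - z‖) • S z)
      (𝓝[>] 0) (𝓝 (S y)) := by
  refine (tendsto_integral_halfSpacePoissonKernel_smul hV hS hy).congr' ?_
  filter_upwards [self_mem_nhdsWithin] with ε hε
  rw [integral_mul_exp_neg_mul_smul_integral_besselJ0_smul hε (by fun_prop) hS, smul_smul,
    one_div_mul_cancel (by positivity), one_smul]

end Plane

/-- **Abel-regularized Bessel-kernel inversion in 2D** (key identity in the proof of
Theorem 2.4). Let `S : ℝ² → ℝ` be continuous with compact support. Then for every
`y ∈ ℝ²`,
`lim_{ε→0⁺} (1/(2π)) ∫_0^∞ k e^{−εk} ∫_{ℝ²} J₀(k|y−z|) S(z) dz dk = S(y)`. -/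
theorem abel_bessel_kernel_inversion_2d
    (S : EuclideanSpace ℝ (Fin 2) → ℝ)
    (hS : Continuous S) (hsupp : HasCompactSupport S)
    (y : EuclideanSpace ℝ (Fin 2)) :
    Tendsto (fun ε : ℝ =>
        (1 / (2 * π)) *
          ∫ k in Set.Ioi (0 : ℝ), k * Real.exp (-ε * k) *
            ∫ z : EuclideanSpace ℝ (Fin 2), besselJ0 (k * ‖y - z‖) * S z)
      (𝓝[>] (0 : ℝ)) (𝓝 (S y)) :=
  abel_bessel_kernel_inversion_2d_general finrank_euclideanSpace_fin
    (hS.integrable_of_hasCompactSupport hsupp) hS.continuousAt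
end
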